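/- arXiv:1304.6917 — 2 statements merged into one kernel-verified Lean document; each statement's English description precedes it below -/
import Mathlib

section
/- Suppose that k, r and t are positive integers with k ≥ 2, max{2, (k−1)/2} ≤ t ≤ k, 1 ≤ r ≤ k and r + t ≥ k. Define κ = r(t+1) − (1/2)(t+r−k)(t+r−k−1 + (2r−2)/(t−1)). Then for each ε > 0 there exists a constant C = C(k,r,t,ε) > 0 such that for all real X ≥ 1 one has J_{r(t+1),k}(X) ≤ C·X^{2r(t+1) − κ + ε}. -/
/-- Number of integral solutions of the Vinogradov system
of degree k in 2s variables, all lying in [1, X]. -/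
noncomputable def Jcount (s k : ℕ) (X : ℝ) : ℕ :=
  Set.ncard {xy : (Fin s → ℤ) × (Fin s → ℤ) |
    (∀ i, 1 ≤ xy.1 i ∧ (xy.1 i : ℝ) ≤ X) ∧
    (∀ i, 1 ≤ xy.2 i ∧ (xy.2 i : ℝ) ≤ X) ∧
    ∀ j ∈ Finset.Icc 1 k, ∑ i, ((xy.1 i) ^ j - (xy.2 i) ^ j) = 0}

/-- The exponent kappa = r(t+1) - (1/2)(t+r-k)(t+r-k-1+(2r-2)/(t-1)). -/
noncomputable def kappa (k r t : ℕ) : ℝ :=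
  (r : ℝ) * ((t : ℝ) + 1) -
    (1/2) * ((t : ℝ) + r - k) * ((t : ℝ) + r - k - 1 + (2*(r:ℝ) - 2)/((t:ℝ) - 1))

namespace Vinogradov

open Finset Polynomial

/-! ### Partitions of index sets into residue classes -/

/-- The partition of `S` according to the residue class of `x i` modulo `q`. -/
def blocks (x : ℤ → ℤ) (q : ℤ) (S : Finset ℤ) : Finset (Finset ℤ) :=
  S.image fun i => S.filter fun j => q ∣ x i - x j

section Blocks

variable {x : ℤ → ℤ} {q : ℤ} {S B : Finset ℤ}

theorem subset_of_mem_blocks (hB : B ∈ blocks x q S) : B ⊆ S := by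
  obtain ⟨i, -, rfl⟩ := mem_image.1 hB
  exact filter_subset _ _

theorem dvd_sub_of_mem_blocks (hB : B ∈ blocks x q S) {i j : ℤ} (hi : i ∈ B) (hj : j ∈ B) :
    q ∣ x i - x j := by
  obtain ⟨c, -, rfl⟩ := mem_image.1 hB
  simpa using dvd_sub (mem_filter.1 hj).2 (mem_filter.1 hi).2

theorem mem_of_mem_blocks (hB : B ∈ blocks x q S) {i j : ℤ} (hi : i ∈ B) (hj : j ∈ S)
    (h : q ∣ x i - x j) : j ∈ B := by
  obtain ⟨c, -, rfl⟩ := mem_image.1 hB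
  refine mem_filter.2 ⟨hj, ?_⟩
  simpa using dvd_add (mem_filter.1 hi).2 h

theorem nonempty_of_mem_blocks (hB : B ∈ blocks x q S) : B.Nonempty := by
  obtain ⟨c, hc, rfl⟩ := mem_image.1 hB
  exact ⟨c, mem_filter.2 ⟨hc, by simp⟩⟩

theorem exists_mem_blocks {i : ℤ} (hi : i ∈ S) : ∃ B ∈ blocks x q S, i ∈ B :=
  ⟨_, mem_image_of_mem _ hi, mem_filter.2 ⟨hi, by simp⟩⟩

theorem eq_of_mem_blocks {B' : Finset ℤ} (hB : B ∈ blocks x q S) (hB' : B' ∈ blocks x q S)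
    {i : ℤ} (hi : i ∈ B) (hi' : i ∈ B') : B = B' := by
  ext j
  exact ⟨fun hj => mem_of_mem_blocks hB' hi' (subset_of_mem_blocks hB hj)
      (dvd_sub_of_mem_blocks hB hi hj),
    fun hj => mem_of_mem_blocks hB hi (subset_of_mem_blocks hB' hj)
      (dvd_sub_of_mem_blocks hB' hi' hj)⟩

theorem pairwiseDisjoint_blocks :
    ((blocks x q S : Finset (Finset ℤ)) : Set (Finset ℤ)).PairwiseDisjoint id := by
  intro B hB B' hB' hne
  refine Finset.disjoint_left.2 fun i hi hi' => hne ?_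
  exact eq_of_mem_blocks hB hB' hi hi'

theorem sum_blocks {M : Type*} [AddCommMonoid M] (h : ℤ → M) :
    ∑ B ∈ blocks x q S, ∑ i ∈ B, h i = ∑ i ∈ S, h i := by
  have : S = (blocks x q S).biUnion id := by
    ext i
    simp only [mem_biUnion, id]
    exact ⟨exists_mem_blocks, fun ⟨B, hB, hi⟩ => subset_of_mem_blocks hB hi⟩
  conv_rhs => rw [this]
  rw [sum_biUnion pairwiseDisjoint_blocks]
  rfl

theorem card_blocks_le (x : ℤ → ℤ) (q : ℕ) (hq : 0 < q) (S : Finset ℤ) :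
    (blocks x q S).card ≤ q := by
  have h : ∀ B ∈ blocks x q S, ∃ i ∈ S, i ∈ B := fun B hB =>
    (nonempty_of_mem_blocks hB).imp fun i hi => ⟨subset_of_mem_blocks hB hi, hi⟩
  choose! c hc hcB using h
  have hq' : (0 : ℤ) < q := by exact_mod_cast hq
  calc (blocks x q S).card ≤ (Finset.Ico (0 : ℤ) q).card := by
        refine Finset.card_le_card_of_injOn (fun B => x (c B) % q) (fun B _ => ?_) ?_
        · simp only [coe_Ico, Set.mem_Ico]
          exact ⟨Int.emod_nonneg _ hq'.ne', Int.emod_lt_of_pos _ hq'⟩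
        · intro B hB B' hB' h
          have : (q : ℤ) ∣ x (c B) - x (c B') :=
            Int.ModEq.dvd (a := x (c B')) (b := x (c B)) h.symm
          exact eq_of_mem_blocks hB hB' (mem_of_mem_blocks hB (hcB B hB) (hc B' hB') this)
            (hcB B' hB')
    _ = q := by simp

theorem blocks_subset_blocks {q' : ℤ} (h : q ∣ q') (hB : B ∈ blocks x q S) :
    blocks x q' B ⊆ blocks x q' S := by
  intro J hJ
  obtain ⟨i, hi, rfl⟩ := mem_image.1 hJ
  refine mem_image.2 ⟨i, subset_of_mem_blocks hB hi, ?_⟩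
  ext j
  simp only [mem_filter]
  exact ⟨fun ⟨hj, hd⟩ => ⟨mem_of_mem_blocks hB hi hj (h.trans hd), hd⟩,
    fun ⟨hj, hd⟩ => ⟨subset_of_mem_blocks hB hj, hd⟩⟩

theorem sum_blocks_blocks {M : Type*} [AddCommMonoid M] {q' : ℤ} (h : q ∣ q')
    (F : Finset ℤ → M) :
    ∑ B ∈ blocks x q S, ∑ J ∈ blocks x q' B, F J = ∑ J ∈ blocks x q' S, F J := by
  have : blocks x q' S = (blocks x q S).biUnion fun B => blocks x q' B := by
    ext J
    simp only [mem_biUnion]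
    refine ⟨fun hJ => ?_, fun ⟨B, hB, hJ⟩ => blocks_subset_blocks h hB hJ⟩
    obtain ⟨i, hi⟩ := nonempty_of_mem_blocks hJ
    obtain ⟨B, hB, hiB⟩ := exists_mem_blocks (x := x) (q := q) (subset_of_mem_blocks hJ hi)
    obtain ⟨J', hJ', hiJ'⟩ := exists_mem_blocks (x := x) (q := q') hiB
    have := eq_of_mem_blocks hJ (blocks_subset_blocks h hB hJ') hi hiJ'
    exact ⟨B, hB, this ▸ hJ'⟩
  rw [this, sum_biUnion]
  intro B hB B' hB' hne
  refine Finset.disjoint_left.2 fun J hJ hJ' => hne ?_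
  obtain ⟨i, hi⟩ := nonempty_of_mem_blocks hJ
  exact eq_of_mem_blocks hB hB' (subset_of_mem_blocks hJ hi) (subset_of_mem_blocks hJ' hi)

theorem blocks_congr {y : ℤ → ℤ} {q' : ℤ}
    (h : ∀ i ∈ S, ∀ j ∈ S, q ∣ x i - x j ↔ q' ∣ y i - y j) : blocks x q S = blocks y q' S := by
  refine image_congr fun i hi => filter_congr fun j hj => h i hi j hj

end Blocks

/-! ### Inequalities for finite sums -/

theorem inner_rpow_le {V : Type*} (s : Finset V) {F G : V → ℝ} (hF : ∀ v, 0 ≤ F v)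
    (hG : ∀ v, 0 ≤ G v) {θ : ℝ} (h0 : 0 < θ) (h1 : θ < 1) :
    ∑ v ∈ s, F v ^ θ * G v ^ (1 - θ) ≤ (∑ v ∈ s, F v) ^ θ * (∑ v ∈ s, G v) ^ (1 - θ) := by
  have h1' : 0 < 1 - θ := by linarith
  have hc : Real.HolderConjugate (1 / θ) (1 / (1 - θ)) := by
    refine Real.holderConjugate_iff.2 ⟨by rw [lt_div_iff₀ h0]; linarith, by simp⟩
  have := Real.inner_le_Lp_mul_Lq_of_nonneg s hc (f := fun v => F v ^ θ)
    (g := fun v => G v ^ (1 - θ)) (fun v _ => Real.rpow_nonneg (hF v) _)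
    (fun v _ => Real.rpow_nonneg (hG v) _)
  have e1 : ∀ v, (F v ^ θ) ^ (1 / θ) = F v := fun v => by
    rw [← Real.rpow_mul (hF v), mul_one_div_cancel h0.ne', Real.rpow_one]
  have e2 : ∀ v, (G v ^ (1 - θ)) ^ (1 / (1 - θ)) = G v := fun v => by
    rw [← Real.rpow_mul (hG v), mul_one_div_cancel h1'.ne', Real.rpow_one]
  simpa only [e1, e2, one_div_one_div] using this

theorem minkowski {V κ : Type*} (s : Finset V) (t : Finset κ) {r : ℝ} (hr : 1 ≤ r)
    {W : V → ℝ} (hW : ∀ v, 0 ≤ W v) {u : κ → V → ℝ} (hu : ∀ b v, 0 ≤ u b v) :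
    ∑ v ∈ s, W v * (∑ b ∈ t, u b v) ^ r ≤ (∑ b ∈ t, (∑ v ∈ s, W v * u b v ^ r) ^ (1 / r)) ^ r := by
  classical
  have hr0 : 0 < r := by linarith
  have key : ∀ c : V → ℝ, (∀ v, 0 ≤ c v) → ∀ v, W v * c v ^ r = (W v ^ (1 / r) * c v) ^ r := by
    intro c hc v
    rw [Real.mul_rpow (Real.rpow_nonneg (hW v) _) (hc v), ← Real.rpow_mul (hW v),
      one_div_mul_cancel hr0.ne', Real.rpow_one]
  have hS : ∀ (t : Finset κ) v, 0 ≤ ∑ b ∈ t, u b v := fun t v => sum_nonneg fun b _ => hu b v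
  have main : (∑ v ∈ s, W v * (∑ b ∈ t, u b v) ^ r) ^ (1 / r) ≤
      ∑ b ∈ t, (∑ v ∈ s, W v * u b v ^ r) ^ (1 / r) := by
    induction t using Finset.induction_on with
    | empty => simp [Real.zero_rpow hr0.ne', Real.zero_rpow (inv_ne_zero hr0.ne')]
    | insert b t hb ih =>
      rw [sum_insert hb]
      refine le_trans ?_ (add_le_add_right ih _)
      have := Real.Lp_add_le_of_nonneg s hr (f := fun v => W v ^ (1 / r) * u b v)
        (g := fun v => W v ^ (1 / r) * ∑ b ∈ t, u b v)
        (fun v _ => mul_nonneg (Real.rpow_nonneg (hW v) _) (hu b v))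
        (fun v _ => mul_nonneg (Real.rpow_nonneg (hW v) _) (hS t v))
      simp only [← mul_add] at this
      simp only [sum_insert hb]
      rw [sum_congr rfl fun v _ => key _ (fun v => add_nonneg (hu b v) (hS t v)) v,
        sum_congr rfl fun v _ => key _ (hu b) v, sum_congr rfl fun v _ => key _ (hS t) v]
      exact this
  have hL : 0 ≤ ∑ v ∈ s, W v * (∑ b ∈ t, u b v) ^ r :=
    sum_nonneg fun v _ => mul_nonneg (hW v) (Real.rpow_nonneg (hS t v) _)
  calc _ = ((∑ v ∈ s, W v * (∑ b ∈ t, u b v) ^ r) ^ (1 / r)) ^ r := by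
        rw [← Real.rpow_mul hL, one_div_mul_cancel hr0.ne', Real.rpow_one]
    _ ≤ _ := Real.rpow_le_rpow (Real.rpow_nonneg hL _) main hr0.le

theorem sum_rpow_le_rpow_sum {κ : Type*} (t : Finset κ) {u : κ → ℝ} (hu : ∀ b, 0 ≤ u b) {r : ℝ}
    (hr : 1 ≤ r) : ∑ b ∈ t, u b ^ r ≤ (∑ b ∈ t, u b) ^ r := by
  classical
  induction t using Finset.induction_on with
  | empty => simp [Real.zero_rpow (by linarith : r ≠ 0)]
  | insert b t hb ih =>
    rw [sum_insert hb, sum_insert hb]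
    exact (add_le_add_right ih _).trans
      (Real.add_rpow_le_rpow_add (hu b) (sum_nonneg fun b _ => hu b) hr)

theorem norm_sum_pow_le {κ : Type*} (t : Finset κ) (z : κ → ℂ) {m : ℕ} (hm : m ≠ 0) :
    ‖∑ b ∈ t, z b‖ ^ m ≤ (t.card : ℝ) ^ m * ∑ b ∈ t, ‖z b‖ ^ m := by
  rcases t.eq_empty_or_nonempty with rfl | ht
  · simp [hm]
  obtain ⟨c, hc, hmax⟩ := exists_max_image t (fun b => ‖z b‖) ht
  have h1 : ‖∑ b ∈ t, z b‖ ≤ t.card * ‖z c‖ := by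
    refine (norm_sum_le _ _).trans ?_
    simpa using sum_le_card_nsmul t _ _ hmax
  calc ‖∑ b ∈ t, z b‖ ^ m ≤ (t.card * ‖z c‖) ^ m := by gcongr
    _ = (t.card : ℝ) ^ m * ‖z c‖ ^ m := mul_pow ..
    _ ≤ _ := by
        gcongr
        exact single_le_sum (f := fun b => ‖z b‖ ^ m) (fun b _ => by positivity) hc

/-- Either one summand dominates, or two different summands are of comparable size. -/
theorem norm_sum_pow_le_narrow_add_broad {κ : Type*} [DecidableEq κ] (t : Finset κ) (z : κ → ℂ)
    {q τ : ℝ} (hq : (t.card : ℝ) ≤ q) (hq1 : 1 ≤ q) (h0 : 0 < τ) (m : ℕ) :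
    ‖∑ b ∈ t, z b‖ ^ (m + 3) ≤ (1 + q * τ) ^ (m + 3) * ∑ b ∈ t, ‖z b‖ ^ (m + 3) +
      q ^ (m + 3) * (τ ^ 2)⁻¹ *
        ∑ b ∈ t, ∑ c ∈ t.erase b, ‖z c‖ ^ 2 * ‖z b‖ ^ (m + 1) := by
  rcases t.eq_empty_or_nonempty with rfl | ht
  · simp
  obtain ⟨b, hb, hmax⟩ := exists_max_image t (fun b => ‖z b‖) ht
  have hq0 : 0 ≤ q := by linarith
  have hN : 0 ≤ (1 + q * τ) ^ (m + 3) * ∑ b ∈ t, ‖z b‖ ^ (m + 3) := by positivity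
  have hBr : 0 ≤ q ^ (m + 3) * (τ ^ 2)⁻¹ *
      ∑ b ∈ t, ∑ c ∈ t.erase b, ‖z c‖ ^ 2 * ‖z b‖ ^ (m + 1) := by positivity
  by_cases h : ∀ c ∈ t.erase b, ‖z c‖ ≤ τ * ‖z b‖
  · refine le_add_of_le_of_nonneg ?_ hBr
    have h1 : ‖∑ b ∈ t, z b‖ ≤ (1 + q * τ) * ‖z b‖ := by
      refine (norm_sum_le _ _).trans ?_
      rw [← add_sum_erase t _ hb]
      have h2 := sum_le_card_nsmul (t.erase b) _ _ h
      have h3 : ((t.erase b).card : ℝ) ≤ q := le_trans (by exact_mod_cast card_erase_le) hq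
      rw [nsmul_eq_mul] at h2
      have : ((t.erase b).card : ℝ) * (τ * ‖z b‖) ≤ q * (τ * ‖z b‖) := by gcongr
      linarith
    calc ‖∑ b ∈ t, z b‖ ^ (m + 3) ≤ ((1 + q * τ) * ‖z b‖) ^ (m + 3) := by gcongr
      _ = (1 + q * τ) ^ (m + 3) * ‖z b‖ ^ (m + 3) := mul_pow ..
      _ ≤ _ := by
        gcongr
        exact single_le_sum (f := fun b => ‖z b‖ ^ (m + 3)) (fun b _ => by positivity) hb
  · push Not at h
    obtain ⟨c, hc, hcb⟩ := h
    refine le_add_of_nonneg_of_le hN ?_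
    have h1 : ‖∑ b ∈ t, z b‖ ≤ q * ‖z b‖ := by
      refine (norm_sum_le _ _).trans ?_
      have h2 := sum_le_card_nsmul t _ _ hmax
      rw [nsmul_eq_mul] at h2
      have : (t.card : ℝ) * ‖z b‖ ≤ q * ‖z b‖ := by gcongr
      linarith
    have h2 : ‖z b‖ ^ 2 ≤ (τ ^ 2)⁻¹ * ‖z c‖ ^ 2 := by
      rw [inv_mul_eq_div, le_div_iff₀ (by positivity), mul_comm, ← mul_pow]
      exact pow_le_pow_left₀ (by positivity) hcb.le 2
    calc ‖∑ b ∈ t, z b‖ ^ (m + 3) ≤ (q * ‖z b‖) ^ (m + 3) := by gcongr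
      _ = q ^ (m + 3) * (‖z b‖ ^ 2 * ‖z b‖ ^ (m + 1)) := by ring
      _ ≤ q ^ (m + 3) * ((τ ^ 2)⁻¹ * ‖z c‖ ^ 2 * ‖z b‖ ^ (m + 1)) := by gcongr
      _ = q ^ (m + 3) * (τ ^ 2)⁻¹ * (‖z c‖ ^ 2 * ‖z b‖ ^ (m + 1)) := by ring
      _ ≤ _ := by
        gcongr
        refine (single_le_sum (f := fun c => ‖z c‖ ^ 2 * ‖z b‖ ^ (m + 1))
          (fun c _ => by positivity) hc).trans ?_
        exact single_le_sum
          (f := fun b => ∑ c ∈ t.erase b, ‖z c‖ ^ 2 * ‖z b‖ ^ (m + 1))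
          (fun b _ => by positivity) hb

end Vinogradov

namespace Vinogradov

open Finset Polynomial

/-! ### Normal forms of curves close to the moment curve -/

/-- The curve `φ` agrees with the moment curve `(X, X ^ 2, …, X ^ k)` modulo `π`. -/
def NearMoment {R : Type*} [CommRing R] (π : R) {k : ℕ} (φ : Fin k → R[X]) : Prop :=
  ∀ j, ∃ ψ : R[X], φ j = X ^ ((j : ℕ) + 1) + C π * ψ

/-- The matrix of the Taylor coefficients of orders `1, …, l` at `z`. -/
noncomputable def taylorMatrix {R : Type*} [CommRing R] {l : ℕ} (Q : Fin l → R[X]) (z : R) :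
    Matrix (Fin l) (Fin l) R :=
  Matrix.of fun i j => (taylor z (Q j)).coeff ((i : ℕ) + 1)

theorem derivative_taylor {R : Type*} [CommRing R] (z : R) (P : R[X]) :
    derivative (taylor z P) = taylor z (derivative P) := by
  simp [taylor_apply, derivative_comp]

theorem det_taylorMatrix_ne_zero {F : Type*} [Field F] {d l : ℕ}
    (hF : ∀ m : ℕ, 1 ≤ m → m ≤ d + l → (m : F) ≠ 0) {z : F} (hz : z ≠ 0 ∨ d = 0)
    {Q : Fin l → F[X]} {c : Fin l → F} (hQ : ∀ j, Q j = C (c j) + X ^ (d + j + 1)) :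
    (taylorMatrix Q z).det ≠ 0 := by
  intro h0
  obtain ⟨v, hv, hv0⟩ := Matrix.exists_mulVec_eq_zero_iff.2 h0
  set P : F[X] := ∑ j, C (v j) * Q j with hP
  have hcoeff : ∀ i, i < l → (taylor z P).coeff (i + 1) = 0 := by
    intro i hi
    have := congrFun hv0 ⟨i, hi⟩
    simp only [Matrix.mulVec, dotProduct, taylorMatrix, Matrix.of_apply, Pi.zero_apply] at this
    rw [hP, map_sum, finsetSum_coeff, ← this]
    refine sum_congr rfl fun j _ => ?_
    rw [taylor_mul, taylor_C, coeff_C_mul, mul_comm]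
  have hdP : derivative P = ∑ j : Fin l, C (v j * ((d + j + 1 : ℕ) : F)) * X ^ (d + (j : ℕ)) := by
    rw [hP, derivative_sum]
    refine sum_congr rfl fun j _ => ?_
    rw [derivative_C_mul, hQ]
    simp only [derivative_add, derivative_C, derivative_X_pow, zero_add, C_mul,
      Nat.add_sub_cancel, mul_assoc]
  have h1 : (X - C z) ^ l ∣ derivative P := by
    rw [X_sub_C_pow_dvd_iff, ← taylor_apply, ← derivative_taylor, X_pow_dvd_iff]
    intro i hi
    rw [coeff_derivative, hcoeff i hi, zero_mul]
  have h2 : X ^ d ∣ derivative P := by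
    rw [hdP]
    exact dvd_sum fun j _ => dvd_mul_of_dvd_right (pow_dvd_pow _ (Nat.le_add_right _ _)) _
  have hco : IsCoprime ((X - C z) ^ l) ((X : F[X]) ^ d) := by
    rcases hz with hz | rfl
    · refine IsCoprime.pow ?_
      have := isCoprime_X_sub_C_of_isUnit_sub (a := z) (b := (0 : F)) (by simpa using hz)
      simpa using this
    · simp [isCoprime_one_right]
  have h3 : (X - C z) ^ l * X ^ d ∣ derivative P := hco.mul_dvd h1 h2
  have hdeg : degree (derivative P) < degree ((X - C z) ^ l * X ^ d) := by
    rw [degree_mul, degree_pow, degree_X_sub_C, degree_X_pow, hdP]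
    refine (degree_sum_le _ _).trans_lt ?_
    rw [Finset.sup_lt_iff (by exact_mod_cast WithBot.bot_lt_coe _)]
    intro j _
    refine (degree_C_mul_X_pow_le _ _).trans_lt ?_
    have : d + (j : ℕ) < l + d := by have := j.2; omega
    simp only [nsmul_eq_mul, mul_one]
    exact_mod_cast this
  have hz : derivative P = 0 := eq_zero_of_dvd_of_degree_lt h3 hdeg
  refine hv (funext fun j => ?_)
  have := congrArg (fun T : F[X] => T.coeff (d + j)) hz
  simp only [hdP, finsetSum_coeff, coeff_C_mul, coeff_X_pow, coeff_zero] at this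
  rw [Finset.sum_eq_single j] at this
  · have h5 := hF (d + j + 1) (by omega) (by have := j.2; omega)
    simpa [h5] using (mul_eq_zero.1 (by simpa using this)).resolve_right (by simpa using h5)
  · intro i _ hij
    rw [if_neg fun h => hij (Fin.ext (by omega)), mul_zero]
  · simp

theorem exists_normal_form {R : Type*} [CommRing R] {l : ℕ} {Q : Fin l → R[X]} {z : R}
    (h : IsUnit (taylorMatrix Q z).det) :
    ∃ T : Matrix (Fin l) (Fin l) R, ∃ c : Fin l → R, ∃ H : Fin l → R[X],
      ∀ i, ∑ j, C (T j i) * taylor z (Q j) =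
        C (c i) + X ^ ((i : ℕ) + 1) + X ^ (l + 1) * H i := by
  refine ⟨(taylorMatrix Q z)⁻¹, ?_⟩
  have hT := Matrix.mul_nonsing_inv _ h
  set T := (taylorMatrix Q z)⁻¹
  have : ∀ i, ∃ c : R, ∃ H : R[X], ∑ j, C (T j i) * taylor z (Q j) =
      C c + X ^ ((i : ℕ) + 1) + X ^ (l + 1) * H := by
    intro i
    set q := ∑ j, C (T j i) * taylor z (Q j) with hq
    have : X ^ (l + 1) ∣ q - (C (q.coeff 0) + X ^ ((i : ℕ) + 1)) := by
      rw [X_pow_dvd_iff]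
      intro m hm
      rcases m with _ | m
      · simp
      · have hm' : m < l := by omega
        have h1 := congrFun (congrFun hT ⟨m, hm'⟩) i
        have h2 : q.coeff (m + 1) = (taylorMatrix Q z * T) ⟨m, hm'⟩ i := by
          rw [hq, finsetSum_coeff, Matrix.mul_apply]
          refine sum_congr rfl fun j _ => ?_
          rw [coeff_C_mul, mul_comm]
          rfl
        rw [coeff_sub, h2, h1, coeff_add, coeff_C_succ, coeff_X_pow, Matrix.one_apply]
        simp [Fin.ext_iff]
    obtain ⟨H, hH⟩ := this
    exact ⟨q.coeff 0, H, by rw [← hH]; ring⟩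
  choose c H hcH using this
  exact ⟨c, H, hcH⟩

theorem map_taylorMatrix {R F : Type*} [CommRing R] [CommRing F] (f : R →+* F) {l : ℕ}
    (Q : Fin l → R[X]) (z : R) :
    f.mapMatrix (taylorMatrix Q z) = taylorMatrix (fun j => (Q j).map f) (f z) := by
  ext i j
  simp [taylorMatrix, ← map_taylor]

theorem NearMoment.map_eq {R F : Type*} [CommRing R] [CommRing F] {f : R →+* F} {π : R}
    (hπ : f π = 0) {k : ℕ} {φ : Fin k → R[X]} (hφ : NearMoment π φ) (j : Fin k) :
    (φ j).map f = X ^ ((j : ℕ) + 1) := by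
  obtain ⟨ψ, hψ⟩ := hφ j
  simp [hψ, hπ]

/-- Normal form at an arbitrary point: after a linear change of coordinates the curve is
`(X, …, X ^ k)` up to terms of degree larger than `k` which vanish modulo `π`. -/
theorem NearMoment.exists_normal_form {R F : Type*} [CommRing R] [Field F] {f : R →+* F}
    [IsLocalHom f] {π : R} (hπ : f π = 0) {k : ℕ} (hF : ∀ m : ℕ, 1 ≤ m → m ≤ k → (m : F) ≠ 0)
    {φ : Fin k → R[X]} (hφ : NearMoment π φ) (η : R) :
    ∃ S : Matrix (Fin k) (Fin k) R, ∃ c : Fin k → R, ∃ H : Fin k → R[X],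
      (∀ i, ∑ j, C (S j i) * taylor η (φ j) =
        C (c i) + X ^ ((i : ℕ) + 1) + X ^ (k + 1) * H i) ∧ ∀ i, (H i).map f = 0 := by
  have hdet : IsUnit (taylorMatrix φ η).det := by
    refine isUnit_of_map_unit f _ (isUnit_iff_ne_zero.2 ?_)
    rw [RingHom.map_det, map_taylorMatrix]
    refine det_taylorMatrix_ne_zero (d := 0) (by simpa using hF) (Or.inr rfl) (c := 0) fun j => ?_
    simp [hφ.map_eq hπ j]
  obtain ⟨S, c, H, hS⟩ := Vinogradov.exists_normal_form hdet
  refine ⟨S, c, H, hS, fun i => ?_⟩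
  ext m
  have h1 := congrArg (fun P : R[X] => (P.map f).coeff (m + (k + 1))) (hS i)
  have h2 : ((C (c i) + X ^ ((i : ℕ) + 1) + X ^ (k + 1) * H i : R[X]).map f).coeff (m + (k + 1)) =
      ((H i).map f).coeff m := by
    have : ¬ (m + (k + 1) = (i : ℕ) + 1) := by have := i.2; omega
    simp only [Polynomial.map_add, Polynomial.map_mul, Polynomial.map_pow, map_X, map_C, coeff_add,
      coeff_X_pow, this, if_false]
    rw [mul_comm, coeff_mul_X_pow, ← add_assoc m k 1, coeff_C_succ]
    simp
  have h3 : ((∑ j, C (S j i) * taylor η (φ j) : R[X]).map f).coeff (m + (k + 1)) = 0 := by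
    rw [Polynomial.map_sum, finsetSum_coeff]
    refine sum_eq_zero fun j _ => ?_
    rw [Polynomial.map_mul, map_C, coeff_C_mul, map_taylor, hφ.map_eq hπ j]
    rw [coeff_eq_zero_of_natDegree_lt, mul_zero]
    rw [natDegree_taylor]
    refine (natDegree_X_pow_le _).trans_lt ?_
    have := j.2
    omega
  rw [h3, h2] at h1
  simpa using h1.symm

/-- A family of directions along which a piece of the curve near `ξ` moves like a curve of the
same type in dimension `l`, whereas the pieces near `η` hardly move at all. -/
theorem NearMoment.exists_directions {R F : Type*} [CommRing R] [Field F] {f : R →+* F}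
    [IsLocalHom f] {π : R} (hπ : f π = 0) {d l : ℕ}
    (hF : ∀ m : ℕ, 1 ≤ m → m ≤ d + l → (m : F) ≠ 0)
    {φ : Fin (d + l) → R[X]} (hφ : NearMoment π φ) {ξ η : R} (hξη : f (ξ - η) ≠ 0)
    {a : ℕ} (ha : 1 ≤ a) :
    ∃ θ : (Fin l → R) → (Fin (d + l) → R), ∃ φ' : Fin l → R[X], NearMoment π φ' ∧
      (∃ c : (Fin l → R) → R, ∀ β y, ∑ j, θ β j * (φ j).eval (ξ + π ^ a * y) =
        c β + π ^ (a * l) * ∑ i, β i * (φ' i).eval y) ∧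
      (∃ c : (Fin l → R) → R, ∀ β b y, ∃ w, ∑ j, θ β j * (φ j).eval (η + π ^ b * y) =
        c β + π ^ (b * (d + 1)) * w) := by
  obtain ⟨S, c, H, hS, hH⟩ := hφ.exists_normal_form hπ hF η
  set q : Fin (d + l) → R[X] := fun i => C (c i) + X ^ ((i : ℕ) + 1) + X ^ (d + l + 1) * H i
  set Q : Fin l → R[X] := fun j => q (Fin.natAdd d j) with hQ
  have hdet : IsUnit (taylorMatrix Q (ξ - η)).det := by
    refine isUnit_of_map_unit f _ (isUnit_iff_ne_zero.2 ?_)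
    rw [RingHom.map_det, map_taylorMatrix]
    refine det_taylorMatrix_ne_zero hF (Or.inl hξη) (c := fun j => f (c (Fin.natAdd d j))) fun j => ?_
    simp [hQ, q, hH]
  obtain ⟨T, e, G, hT⟩ := Vinogradov.exists_normal_form hdet
  have hQeval : ∀ j t, (Q j).eval (t - η) = ∑ j', S j' (Fin.natAdd d j) * (φ j').eval t := by
    intro j t
    have := congrArg (eval (t - η)) (hS (Fin.natAdd d j))
    simp only [eval_finsetSum, eval_mul, eval_C, taylor_eval, sub_add_cancel] at this
    rw [this]
  set θ : (Fin l → R) → (Fin (d + l) → R) := fun β j' =>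
    ∑ i, ∑ j, S j' (Fin.natAdd d j) * T j i * π ^ (a * (l - 1 - i)) * β i with hθ
  have hθeval : ∀ β t, ∑ j', θ β j' * (φ j').eval t =
      ∑ i : Fin l, π ^ (a * (l - 1 - i)) * β i * ∑ j, T j i * (Q j).eval (t - η) := by
    intro β t
    simp only [hθ, hQeval, sum_mul, mul_sum]
    rw [sum_comm]
    refine sum_congr rfl fun i _ => ?_
    rw [sum_comm]
    refine sum_congr rfl fun j _ => sum_congr rfl fun j' _ => ?_
    ring
  refine ⟨θ, fun i => X ^ ((i : ℕ) + 1) +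
    C π * (C (π ^ (a * (l - i) - 1)) * (X ^ (l + 1) * (G i).comp (C (π ^ a) * X))),
    fun i => ⟨_, rfl⟩, ⟨fun β => ∑ i : Fin l, π ^ (a * (l - 1 - i)) * β i * e i, fun β y => ?_⟩,
    ⟨fun β => ∑ i : Fin l, π ^ (a * (l - 1 - i)) * β i * ∑ j, T j i * c (Fin.natAdd d j),
      fun β b y => ?_⟩⟩
  · rw [hθeval, mul_sum, ← sum_add_distrib]
    refine sum_congr rfl fun i _ => ?_
    have h1 := congrArg (eval (π ^ a * y)) (hT i)
    simp only [eval_finsetSum, eval_mul, eval_C, taylor_eval, eval_add, eval_pow, eval_X] at h1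
    have h2 : ξ + π ^ a * y - η = π ^ a * y + (ξ - η) := by ring
    rw [h2, h1]
    simp only [eval_add, eval_pow, eval_X, eval_mul, eval_C, eval_comp]
    obtain ⟨u, hu⟩ : ∃ u, l = i + 1 + u := ⟨l - 1 - i, by have := i.2; omega⟩
    have e1 : l - 1 - (i : ℕ) = u := by omega
    have e2 : a * (l - i) = a * u + a := by
      have : l - (i : ℕ) = u + 1 := by omega
      rw [this]; ring
    obtain ⟨a', rfl⟩ : ∃ a', a = a' + 1 := ⟨a - 1, by omega⟩
    have e3 : (a' + 1) * (l - i) - 1 = (a' + 1) * u + a' := by omega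
    have e4 : π ^ ((a' + 1) * l) = π ^ ((a' + 1) * u) * (π ^ (a' + 1)) ^ ((i : ℕ) + 1) := by
      rw [← pow_mul, ← pow_add, ← mul_add]; congr 2; omega
    have e5 : (π ^ (a' + 1)) ^ (l + 1) * π ^ ((a' + 1) * u) =
        π ^ ((a' + 1) * l) * π * π ^ ((a' + 1) * u + a') := by
      rw [← pow_mul, ← pow_add, ← pow_succ, ← pow_add]; congr 1; ring
    rw [e1, e3, mul_pow, mul_pow]
    linear_combination (-β i * y ^ ((i : ℕ) + 1)) * e4 +
      (β i * y ^ (l + 1) * eval (π ^ (a' + 1) * y) (G i)) * e5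
  · have h1 : ∀ j : Fin l, ∃ w, (Q j).eval (π ^ b * y) =
        c (Fin.natAdd d j) + π ^ (b * (d + 1)) * w := by
      intro j
      refine ⟨π ^ (b * j) * y ^ (d + j + 1) +
        π ^ (b * l) * y ^ (d + l + 1) * (H (Fin.natAdd d j)).eval (π ^ b * y), ?_⟩
      simp only [hQ, q, eval_add, eval_mul, eval_pow, eval_X, eval_C, Fin.val_natAdd]
      ring
    choose w hw using h1
    refine ⟨∑ i : Fin l, π ^ (a * (l - 1 - i)) * β i * ∑ j, T j i * w j, ?_⟩
    rw [hθeval, mul_sum, ← sum_add_distrib]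
    refine sum_congr rfl fun i _ => ?_
    simp only [add_sub_cancel_left, hw, mul_add, sum_add_distrib, mul_sum]
    congr 1
    refine sum_congr rfl fun j _ => ?_
    ring

theorem isLocalHom_castHom {p N : ℕ} (hp : p.Prime) (hN : N ≠ 0) :
    IsLocalHom (ZMod.castHom (dvd_pow_self p hN) (ZMod p)) := by
  have : NeZero (p ^ N) := ⟨pow_ne_zero _ hp.ne_zero⟩
  refine ⟨fun x hx => ?_⟩
  obtain ⟨m, rfl⟩ := ZMod.natCast_zmod_surjective x
  rw [map_natCast] at hx
  rw [ZMod.isUnit_iff_coprime] at hx ⊢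
  exact Nat.Coprime.pow_right N hx

end Vinogradov

namespace Vinogradov

open Finset Polynomial

/-! ### Decoupling inequalities -/

/-- The moment of order `P`, with weight `W`, of the sum of the functions `g i` over `i ∈ S`. -/
noncomputable def moment {V : Type*} [Fintype V] (P : ℕ) (W : V → ℝ) (g : ℤ → V → ℂ) (S : Finset ℤ) : ℝ :=
  ∑ α, W α * ‖∑ i ∈ S, g i α‖ ^ P

/-- The sum of the squares of the weighted norms of order `P` over a family of index sets. -/
noncomputable def sqNormSum {V : Type*} [Fintype V] (P : ℕ) (W : V → ℝ) (g : ℤ → V → ℂ)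
    (𝓑 : Finset (Finset ℤ)) : ℝ :=
  ∑ B ∈ 𝓑, moment P W g B ^ (2 / (P : ℝ))

variable {p : ℕ} [Fact p.Prime]

/-- The character of `(ZMod (p ^ N)) ^ k` attached to the point `φ t`, scaled by `p ^ m`. -/
noncomputable def wave {N k : ℕ} (φ : Fin k → (ZMod (p ^ N))[X]) (m : ℕ) (t : ℤ)
    (α : Fin k → ZMod (p ^ N)) : ℂ :=
  ZMod.stdAddChar ((p : ZMod (p ^ N)) ^ m * ∑ j, α j * (φ j).eval (t : ZMod (p ^ N)))

variable (p) in
/-- Exponential sums along curves close to the moment curve of degree `k`, in mean of order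
`k (k + 1)` over a group of exponent `p ^ (n k)`, decouple with constant `D` into the pieces
coming from the residue classes modulo `p ^ n`. -/
def Decouples (k n : ℕ) (D : ℝ) : Prop :=
  ∀ N, 0 < N → n * k ≤ N → ∀ φ : Fin k → (ZMod (p ^ N))[X],
    NearMoment (p : ZMod (p ^ N)) φ → ∀ (x : ℤ → ℤ) (a : ℤ → ℂ) (S : Finset ℤ),
      moment (k * (k + 1)) 1 (fun i α => a i * wave φ (N - n * k) (x i) α) S ≤
        D ^ (k * (k + 1)) * sqNormSum (k * (k + 1)) 1
          (fun i α => a i * wave φ (N - n * k) (x i) α) (blocks x ((p : ℤ) ^ n) S) ^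
            (((k * (k + 1) : ℕ) : ℝ) / 2)

section Moment

variable {V : Type*} [Fintype V] {P : ℕ} {W : V → ℝ} {g : ℤ → V → ℂ}

theorem moment_nonneg (hW : ∀ α, 0 ≤ W α) (S : Finset ℤ) : 0 ≤ moment P W g S :=
  sum_nonneg fun α _ => mul_nonneg (hW α) (by positivity)

theorem sqNormSum_nonneg (hW : ∀ α, 0 ≤ W α) (𝓑 : Finset (Finset ℤ)) :
    0 ≤ sqNormSum P W g 𝓑 :=
  sum_nonneg fun _ _ => Real.rpow_nonneg (moment_nonneg hW _) _

theorem sqNormSum_mono (hW : ∀ α, 0 ≤ W α) {𝓑 𝓑' : Finset (Finset ℤ)} (h : 𝓑 ⊆ 𝓑') :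
    sqNormSum P W g 𝓑 ≤ sqNormSum P W g 𝓑' :=
  sum_le_sum_of_subset_of_nonneg h fun _ _ _ => Real.rpow_nonneg (moment_nonneg hW _) _

end Moment

theorem rpow_two_div_rpow {P : ℕ} (hP : P ≠ 0) {y : ℝ} (hy : 0 ≤ y) :
    (y ^ (2 / (P : ℝ))) ^ ((P : ℝ) / 2) = y := by
  rw [← Real.rpow_mul hy, div_mul_div_cancel₀ (by exact_mod_cast hP), div_self two_ne_zero,
    Real.rpow_one]

theorem Decouples.mono {k n : ℕ} {D D' : ℝ} (h : Decouples p k n D) (hD : 0 ≤ D) (hDD' : D ≤ D') :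
    Decouples p k n D' := by
  intro N hN hnk φ hφ x a S
  refine (h N hN hnk φ hφ x a S).trans ?_
  have := sqNormSum_nonneg (P := k * (k + 1)) (W := 1)
    (g := fun i α => a i * wave φ (N - n * k) (x i) α) (fun _ => zero_le_one)
    (blocks x ((p : ℤ) ^ n) S)
  gcongr

/-- A decoupling inequality may be applied along the orbits of any family of translations. -/
theorem Decouples.transfer {l n N : ℕ} {D : ℝ} (hD : Decouples p l n D) (hl : l ≠ 0) (hN : 0 < N)
    (hnN : n * l ≤ N) {φ : Fin l → (ZMod (p ^ N))[X]} (hφ : NearMoment (p : ZMod (p ^ N)) φ)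
    {V : Type*} [Fintype V] [AddCommGroup V] {W : V → ℝ} (hW : ∀ α, 0 ≤ W α)
    {θ : (Fin l → ZMod (p ^ N)) → V} (hWθ : ∀ α β, W (α + θ β) = W α)
    {g : ℤ → V → ℂ} {S : Finset ℤ} {y : ℤ → ℤ} {c : (Fin l → ZMod (p ^ N)) → ℂ}
    (hc : ∀ β, ‖c β‖ = 1)
    (hg : ∀ i ∈ S, ∀ α β, g i (α + θ β) = g i α * (c β * wave φ (N - n * l) (y i) β)) :
    moment (l * (l + 1)) W g S ≤ D ^ (l * (l + 1)) *
      sqNormSum (l * (l + 1)) W g (blocks y ((p : ℤ) ^ n) S) ^ (((l * (l + 1) : ℕ) : ℝ) / 2) := by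
  have hP2 : 2 ≤ l * (l + 1) := by nlinarith [Nat.pos_of_ne_zero hl]
  set P := l * (l + 1) with hP
  have hP0 : P ≠ 0 := by omega
  have hPr : (2 : ℝ) ≤ P := by exact_mod_cast hP2
  set K : ℝ := (Fintype.card (Fin l → ZMod (p ^ N)) : ℝ) with hK
  have hK0 : 0 < K := by rw [hK]; exact_mod_cast Fintype.card_pos
  set G : V → ℤ → (Fin l → ZMod (p ^ N)) → ℂ :=
    fun α i β => g i α * wave φ (N - n * l) (y i) β with hG
  have key : ∀ B ⊆ S, K * moment P W g B = ∑ α, W α * moment P 1 (G α) B := by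
    intro B hB
    have h1 : ∀ β, moment P W g B = ∑ α, W α * ‖∑ i ∈ B, G α i β‖ ^ P := by
      intro β
      rw [moment, ← Equiv.sum_comp (Equiv.addRight (θ β))]
      refine sum_congr rfl fun α _ => ?_
      rw [Equiv.coe_addRight, hWθ]
      congr 2
      have : ∑ i ∈ B, g i (α + θ β) = c β * ∑ i ∈ B, G α i β := by
        rw [mul_sum]
        refine sum_congr rfl fun i hi => ?_
        rw [hg i (hB hi), hG]
        ring
      rw [this, norm_mul, hc, one_mul]
    calc K * moment P W g B = ∑ β : Fin l → ZMod (p ^ N), moment P W g B := by simp [hK]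
      _ = ∑ β, ∑ α, W α * ‖∑ i ∈ B, G α i β‖ ^ P := sum_congr rfl fun β _ => h1 β
      _ = _ := by
        rw [sum_comm]
        refine sum_congr rfl fun α _ => ?_
        simp [moment, mul_sum]
  have hm : ∀ α B, 0 ≤ moment P 1 (G α) B := fun α B => moment_nonneg (fun _ => zero_le_one) B
  have hmain : K * moment P W g S ≤
      K * (D ^ P * sqNormSum P W g (blocks y ((p : ℤ) ^ n) S) ^ ((P : ℝ) / 2)) := by
    have hDP : 0 ≤ D ^ P := (Nat.even_mul_succ_self l).pow_nonneg D
    calc K * moment P W g S = ∑ α, W α * moment P 1 (G α) S := key S subset_rfl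
      _ ≤ ∑ α, W α * (D ^ P * sqNormSum P 1 (G α) (blocks y ((p : ℤ) ^ n) S) ^ ((P : ℝ) / 2)) := by
        gcongr with α
        · exact hW α
        · exact hD N hN hnN φ hφ y (fun i => g i α) S
      _ = D ^ P * ∑ α, W α *
            (∑ B ∈ blocks y ((p : ℤ) ^ n) S, moment P 1 (G α) B ^ (2 / (P : ℝ))) ^
              ((P : ℝ) / 2) := by
        rw [mul_sum]
        refine sum_congr rfl fun α _ => ?_
        rw [sqNormSum]
        ring
      _ ≤ D ^ P * (∑ B ∈ blocks y ((p : ℤ) ^ n) S,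
            (∑ α, W α * (moment P 1 (G α) B ^ (2 / (P : ℝ))) ^ ((P : ℝ) / 2)) ^
              (1 / ((P : ℝ) / 2))) ^ ((P : ℝ) / 2) := by
        gcongr
        exact minkowski univ _ (by linarith) hW (fun B α => Real.rpow_nonneg (hm α B) _)
      _ = D ^ P * (∑ B ∈ blocks y ((p : ℤ) ^ n) S,
            K ^ (2 / (P : ℝ)) * moment P W g B ^ (2 / (P : ℝ))) ^ ((P : ℝ) / 2) := by
        congr 2
        refine sum_congr rfl fun B hB => ?_
        rw [one_div_div, ← Real.mul_rpow hK0.le (moment_nonneg hW B),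
          key B (subset_of_mem_blocks hB)]
        congr 1
        refine sum_congr rfl fun α _ => ?_
        rw [rpow_two_div_rpow hP0 (hm α B)]
      _ = _ := by
        rw [← mul_sum]
        change D ^ P * (K ^ (2 / (P : ℝ)) * sqNormSum P W g _) ^ ((P : ℝ) / 2) = _
        rw [Real.mul_rpow (by positivity) (sqNormSum_nonneg hW _), rpow_two_div_rpow hP0 hK0.le]
        ring
  exact le_of_mul_le_mul_left hmain hK0

theorem wave_add_smul {N k : ℕ} (φ : Fin k → (ZMod (p ^ N))[X]) (m m' : ℕ) (t : ℤ)
    (α γ : Fin k → ZMod (p ^ N)) :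
    wave φ m t (α + (p : ZMod (p ^ N)) ^ m' • γ) = wave φ m t α *
      ZMod.stdAddChar ((p : ZMod (p ^ N)) ^ (m + m') *
        ∑ j, γ j * (φ j).eval (t : ZMod (p ^ N))) := by
  rw [wave, wave, ← AddChar.map_add_eq_mul]
  congr 1
  simp only [Pi.add_apply, Pi.smul_apply, smul_eq_mul, add_mul, sum_add_distrib, mul_add, mul_sum]
  congr 1
  refine sum_congr rfl fun j _ => ?_
  ring

/-- Decoupling of degree `l ≤ k` for a piece of a sum of degree `k` in a residue class modulo
`p ^ a`, weighted by a power of a piece in a residue class modulo `p ^ b`, where the two residue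
classes are different modulo `p`. -/
theorem Decouples.weighted {k d l n N a a' b : ℕ} {D : ℝ} (hk : k = d + l)
    (hD : Decouples p l (a' - a) D)
    (hl : l ≠ 0) (hp : k < p) (hN : 0 < N) (hnN : n * k ≤ N)
    {φ : Fin k → (ZMod (p ^ N))[X]} (hφ : NearMoment (p : ZMod (p ^ N)) φ)
    (ha : 1 ≤ a) (haa' : a ≤ a') (ha' : a' * l ≤ n * k) (hb : a' * l ≤ b * (d + 1))
    {x : ℤ → ℤ} {A : ℤ → ℂ} {S T : Finset ℤ}
    (hS : ∀ i ∈ S, ∀ j ∈ S, (p : ℤ) ^ a ∣ x i - x j)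
    (hT : ∀ i ∈ T, ∀ j ∈ T, (p : ℤ) ^ b ∣ x i - x j)
    (hST : ∀ i ∈ S, ∀ j ∈ T, ¬ (p : ℤ) ∣ x i - x j) (e : ℕ)
    {g : ℤ → (Fin k → ZMod (p ^ N)) → ℂ}
    (hg : g = fun i α => A i * wave φ (N - n * k) (x i) α) :
    moment (l * (l + 1)) (fun α => ‖∑ i ∈ T, g i α‖ ^ e) g S ≤ D ^ (l * (l + 1)) *
      sqNormSum (l * (l + 1)) (fun α => ‖∑ i ∈ T, g i α‖ ^ e) g (blocks x ((p : ℤ) ^ a') S) ^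
        (((l * (l + 1) : ℕ) : ℝ) / 2) := by
  subst hk
  have hpp : p.Prime := Fact.out
  have hP0 : l * (l + 1) ≠ 0 := by positivity
  have hW : ∀ α, 0 ≤ ‖∑ i ∈ T, g i α‖ ^ e := fun α => by positivity
  rcases S.eq_empty_or_nonempty with rfl | ⟨i₀, hi₀⟩
  · have : moment (l * (l + 1)) (fun α => ‖∑ i ∈ T, g i α‖ ^ e) g ∅ = 0 := by
      simp [moment, hl]
    rw [this]
    exact mul_nonneg ((Nat.even_mul_succ_self l).pow_nonneg D)
      (Real.rpow_nonneg (sqNormSum_nonneg hW _) _)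
  obtain ⟨η, hη, hηS⟩ : ∃ η : ℤ, (∀ j ∈ T, (p : ℤ) ^ b ∣ x j - η) ∧ ¬ (p : ℤ) ∣ x i₀ - η := by
    rcases T.eq_empty_or_nonempty with rfl | ⟨j₀, hj₀⟩
    · refine ⟨x i₀ + 1, by simp, ?_⟩
      simpa using (Nat.prime_iff_prime_int.1 hpp).not_dvd_one
    · exact ⟨x j₀, fun j hj => hT j hj j₀ hj₀, hST i₀ hi₀ j₀ hj₀⟩
  set f := ZMod.castHom (dvd_pow_self p hN.ne') (ZMod p)
  have hf : IsLocalHom f := isLocalHom_castHom hpp hN.ne'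
  have hfp : f (p : ZMod (p ^ N)) = 0 := by simp
  have hF : ∀ m : ℕ, 1 ≤ m → m ≤ d + l → (m : ZMod p) ≠ 0 := by
    intro m h1 h2 h
    rw [ZMod.natCast_eq_zero_iff] at h
    have := Nat.le_of_dvd (by omega) h
    omega
  have hfξη : f ((x i₀ : ZMod (p ^ N)) - (η : ZMod (p ^ N))) ≠ 0 := by
    rw [← Int.cast_sub, map_intCast, Ne, ZMod.intCast_zmod_eq_zero_iff_dvd]
    exact hηS
  obtain ⟨θ, φ', hφ', ⟨c, hc⟩, ⟨c', hc'⟩⟩ := hφ.exists_directions hfp hF hfξη ha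
  have hzero : (p : ZMod (p ^ N)) ^ N = 0 := by exact_mod_cast ZMod.natCast_self (p ^ N)
  have hexp : N - n * (d + l) + (n * (d + l) - a' * l) = N - a' * l := by omega
  choose! y hy using fun i hi => hS i hi i₀ hi₀
  have hblocks : blocks x ((p : ℤ) ^ a') S = blocks y ((p : ℤ) ^ (a' - a)) S := by
    refine blocks_congr fun i hi j hj => ?_
    have h1 : x i - x j = (p : ℤ) ^ a * (y i - y j) := by linear_combination hy i hi - hy j hj
    have h2 : (p : ℤ) ^ a' = (p : ℤ) ^ a * (p : ℤ) ^ (a' - a) := by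
      rw [← pow_add]; congr 1; omega
    rw [h1, h2]
    exact mul_dvd_mul_iff_left (pow_ne_zero _ (by exact_mod_cast hpp.ne_zero))
  rw [hblocks]
  refine hD.transfer hl hN ?_ hφ' hW
    (θ := fun β => (p : ZMod (p ^ N)) ^ (n * (d + l) - a' * l) • θ β) ?_
    (c := fun β => ZMod.stdAddChar ((p : ZMod (p ^ N)) ^ (N - a' * l) * c β)) ?_ ?_
  · exact (Nat.mul_le_mul_right _ (Nat.sub_le _ _)).trans (ha'.trans hnN)
  · intro α β
    congr 1
    have : ∀ j ∈ T, g j (α + (p : ZMod (p ^ N)) ^ (n * (d + l) - a' * l) • θ β) =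
        ZMod.stdAddChar ((p : ZMod (p ^ N)) ^ (N - a' * l) * c' β) * g j α := by
      intro j hj
      obtain ⟨z, hz⟩ := hη j hj
      have hz' : (x j : ZMod (p ^ N)) = η + (p : ZMod (p ^ N)) ^ b * z := by
        have : x j = η + (p : ℤ) ^ b * z := by linear_combination hz
        rw [this]; push_cast; rfl
      obtain ⟨w, hw⟩ := hc' β b z
      rw [hg]
      simp only
      rw [wave_add_smul, hexp, hz', hw, mul_add ((p : ZMod (p ^ N)) ^ (N - a' * l)), ← mul_assoc _ _ w,
        ← pow_add, pow_eq_zero_of_le (n := N - a' * l + b * (d + 1)) (by omega) hzero,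
        zero_mul, add_zero]
      ring
    rw [sum_congr rfl this, ← mul_sum, norm_mul, AddChar.norm_apply, one_mul]
  · intro β
    exact AddChar.norm_apply _ _
  · intro i hi α β
    have hi' : (x i : ZMod (p ^ N)) = x i₀ + (p : ZMod (p ^ N)) ^ a * y i := by
      have : x i = x i₀ + (p : ℤ) ^ a * y i := by linear_combination hy i hi
      rw [this]; push_cast; rfl
    rw [hg]
    simp only
    have hwave : wave φ' (N - (a' - a) * l) (y i) β = ZMod.stdAddChar
        ((p : ZMod (p ^ N)) ^ (N - a' * l) * ((p : ZMod (p ^ N)) ^ (a * l) *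
          ∑ j, β j * (φ' j).eval (y i : ZMod (p ^ N)))) := by
      have h1 : a' * l = (a' - a) * l + a * l := by rw [← add_mul]; congr 1; omega
      have h2 : a' * l ≤ N := ha'.trans hnN
      rw [wave, ← mul_assoc, ← pow_add]
      congr 3
      omega
    rw [wave_add_smul, hexp, hi', hc, mul_add ((p : ZMod (p ^ N)) ^ (N - a' * l)), AddChar.map_add_eq_mul, hwave]
    ring

end Vinogradov

namespace Vinogradov

open Finset Polynomial

/-! ### Orthogonality -/

theorem sum_stdAddChar_sum_mul {q k : ℕ} [NeZero q] (b : Fin k → ZMod q) :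
    ∑ α : Fin k → ZMod q, ZMod.stdAddChar (∑ j, α j * b j) =
      if b = 0 then (Fintype.card (Fin k → ZMod q) : ℂ) else 0 := by
  have h1 : ∑ α : Fin k → ZMod q, ZMod.stdAddChar (∑ j, α j * b j) =
      ∏ j, ∑ y : ZMod q, ZMod.stdAddChar (y * b j) := by
    rw [prod_univ_sum, Fintype.piFinset_univ]
    refine sum_congr rfl fun α _ => ?_
    exact map_prod ZMod.stdAddChar.toMonoidHom (fun j => Multiplicative.ofAdd (α j * b j)) univ
  rw [h1]
  simp_rw [AddChar.sum_mulShift _ (ZMod.isPrimitive_stdAddChar q)]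
  split_ifs with h
  · simp [h]
  · obtain ⟨j, hj⟩ := Function.ne_iff.1 h
    exact prod_eq_zero (mem_univ j) (by rw [if_neg (show b j ≠ 0 from hj), Nat.cast_zero])

theorem sum_norm_sum_sq {V κ : Type*} [Fintype V] (t : Finset κ) (F : κ → V → ℂ)
    (hF : ∀ b ∈ t, ∀ c ∈ t, b ≠ c → ∑ α, F b α * (starRingEnd ℂ) (F c α) = 0) :
    ∑ α, ‖∑ b ∈ t, F b α‖ ^ 2 = ∑ b ∈ t, ∑ α, ‖F b α‖ ^ 2 := by
  classical
  have h : ((∑ α, ‖∑ b ∈ t, F b α‖ ^ 2 : ℝ) : ℂ) = ((∑ b ∈ t, ∑ α, ‖F b α‖ ^ 2 : ℝ) : ℂ) := by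
    push_cast
    simp_rw [← Complex.mul_conj', map_sum, sum_mul_sum]
    rw [sum_comm]
    refine sum_congr rfl fun b hb => ?_
    rw [sum_comm, sum_eq_single b]
    · exact fun c hc hcb => hF b hb c hc hcb.symm
    · exact fun h => absurd hb h
  exact_mod_cast h

variable {p : ℕ} [Fact p.Prime]

theorem wave_mul_conj {N k : ℕ} (φ : Fin k → (ZMod (p ^ N))[X]) (m : ℕ) (s t : ℤ)
    (α : Fin k → ZMod (p ^ N)) :
    wave φ m s α * (starRingEnd ℂ) (wave φ m t α) = ZMod.stdAddChar (∑ j, α j *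
      ((p : ZMod (p ^ N)) ^ m * ((φ j).eval (s : ZMod (p ^ N)) -
        (φ j).eval (t : ZMod (p ^ N))))) := by
  rw [wave, wave, ← AddChar.map_neg_eq_conj, ← AddChar.map_add_eq_mul, ← sub_eq_add_neg, ← mul_sub,
    ← sum_sub_distrib, mul_sum]
  congr 1
  refine sum_congr rfl fun j _ => ?_
  ring

theorem pow_dvd_of_pow_mul_eq_zero {N m n : ℕ} (h : N = m + n) {z : ℤ}
    (hz : (p : ZMod (p ^ N)) ^ m * z = 0) : (p : ℤ) ^ n ∣ z := by
  have hp : (p : ℤ) ≠ 0 := by exact_mod_cast (Fact.out : p.Prime).ne_zero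
  have : ((((p : ℤ) ^ m * z : ℤ)) : ZMod (p ^ N)) = 0 := by push_cast; exact hz
  rw [ZMod.intCast_zmod_eq_zero_iff_dvd, h] at this
  push_cast [pow_add] at this
  exact (mul_dvd_mul_iff_left (pow_ne_zero m hp)).1 this

variable (p) in
theorem decouples_one (n : ℕ) : Decouples p 1 n 1 := by
  intro N hN hnN φ hφ x a S
  have hW : ∀ α : Fin 1 → ZMod (p ^ N), (0 : ℝ) ≤ (1 : (Fin 1 → ZMod (p ^ N)) → ℝ) α :=
    fun _ => zero_le_one
  have hzero : (p : ZMod (p ^ N)) ^ N = 0 := by exact_mod_cast ZMod.natCast_self (p ^ N)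
  set g : ℤ → (Fin 1 → ZMod (p ^ N)) → ℂ := fun i α => a i * wave φ (N - n * 1) (x i) α with hg
  have key : ∀ i j : ℤ, ¬ (p : ℤ) ^ n ∣ x i - x j →
      ∑ α, g i α * (starRingEnd ℂ) (g j α) = 0 := by
    intro i j hij
    have h1 : ∀ α, g i α * (starRingEnd ℂ) (g j α) = a i * (starRingEnd ℂ) (a j) *
        (wave φ (N - n * 1) (x i) α * (starRingEnd ℂ) (wave φ (N - n * 1) (x j) α)) := by
      intro α
      simp only [hg, map_mul]
      ring
    simp_rw [h1, wave_mul_conj]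
    rw [← mul_sum, sum_stdAddChar_sum_mul, if_neg, mul_zero]
    intro h
    apply hij
    have h0 := congrFun h 0
    obtain ⟨ψ, hψ⟩ := hφ 0
    obtain ⟨w, hw⟩ := sub_dvd_eval_sub (x i : ZMod (p ^ N)) (x j : ZMod (p ^ N)) ψ
    have hu : IsUnit (1 + (p : ZMod (p ^ N)) * w) := by
      refine IsNilpotent.isUnit_one_add ⟨N, ?_⟩
      rw [mul_pow, hzero, zero_mul]
    simp only [hψ, eval_add, eval_X, eval_mul, eval_C, Pi.zero_apply, Fin.val_zero,
      zero_add, pow_one] at h0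
    have h2 : (p : ZMod (p ^ N)) ^ (N - n * 1) * ((x i - x j : ℤ) : ZMod (p ^ N)) *
        (1 + (p : ZMod (p ^ N)) * w) = 0 := by
      rw [← h0]
      push_cast
      linear_combination (-(p : ZMod (p ^ N)) ^ (N - n * 1) * p) * hw
    exact pow_dvd_of_pow_mul_eq_zero (by omega) ((hu.mul_left_eq_zero).1 h2)
  have h2 := sum_norm_sum_sq (blocks x ((p : ℤ) ^ n) S) (fun B α => ∑ i ∈ B, g i α) (by
    intro B hB B' hB' hne
    simp only [map_sum, sum_mul_sum]
    rw [sum_comm]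
    refine sum_eq_zero fun i hi => ?_
    rw [sum_comm]
    refine sum_eq_zero fun j hj => key i j fun hd => hne ?_
    exact eq_of_mem_blocks hB hB' hi
      (mem_of_mem_blocks hB' hj (subset_of_mem_blocks hB hi) (by simpa using (dvd_neg.2 hd))))
  have e1 : moment (1 * (1 + 1)) 1 g S = ∑ α, ‖∑ i ∈ S, g i α‖ ^ 2 := by simp [moment]
  have e2 : sqNormSum (1 * (1 + 1)) 1 g (blocks x ((p : ℤ) ^ n) S) =
      ∑ B ∈ blocks x ((p : ℤ) ^ n) S, ∑ α, ‖∑ i ∈ B, g i α‖ ^ 2 := by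
    simp [sqNormSum, moment]
  rw [e1, e2, ← h2]
  simp [sum_blocks]

variable (p) in
/-- The trivial decoupling inequality. -/
theorem decouples_trivial {k : ℕ} (hk : k ≠ 0) (n : ℕ) : Decouples p k n ((p : ℝ) ^ n) := by
  intro N hN hnN φ hφ x a S
  have hW : ∀ α : Fin k → ZMod (p ^ N), (0 : ℝ) ≤ (1 : (Fin k → ZMod (p ^ N)) → ℝ) α :=
    fun _ => zero_le_one
  set g : ℤ → (Fin k → ZMod (p ^ N)) → ℂ := fun i α => a i * wave φ (N - n * k) (x i) α
  have hP2 : 2 ≤ k * (k + 1) := by nlinarith [Nat.pos_of_ne_zero hk]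
  set P := k * (k + 1)
  have hP0 : P ≠ 0 := by omega
  have hPr : (2 : ℝ) ≤ P := by exact_mod_cast hP2
  set 𝓑 := blocks x ((p : ℤ) ^ n) S with h𝓑
  have hcard : (𝓑.card : ℝ) ≤ (p : ℝ) ^ n := by
    have := card_blocks_le x (p ^ n) (pow_pos (Fact.out : p.Prime).pos n) S
    push_cast at this
    exact_mod_cast this
  calc moment P 1 g S ≤ ∑ α, ((p : ℝ) ^ n) ^ P * ∑ B ∈ 𝓑, ‖∑ i ∈ B, g i α‖ ^ P := by
        refine sum_le_sum fun α _ => ?_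
        rw [Pi.one_apply, one_mul, ← sum_blocks (x := x) (q := (p : ℤ) ^ n)]
        refine (norm_sum_pow_le _ _ hP0).trans ?_
        gcongr
    _ = ((p : ℝ) ^ n) ^ P * ∑ B ∈ 𝓑, (moment P 1 g B ^ (2 / (P : ℝ))) ^ ((P : ℝ) / 2) := by
        rw [← mul_sum, sum_comm]
        congr 1
        refine sum_congr rfl fun B _ => ?_
        rw [rpow_two_div_rpow hP0 (moment_nonneg hW _)]
        simp [moment]
    _ ≤ _ := by
        gcongr
        exact sum_rpow_le_rpow_sum _ (fun B => Real.rpow_nonneg (moment_nonneg hW _) _)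
          (by linarith)

end Vinogradov

namespace Vinogradov

open Finset Polynomial

/-! ### Bilinear estimates -/

theorem sum_pow_mul_pow_le_interpolate {V : Type*} [Fintype V] {s t : V → ℝ} (hs : ∀ v, 0 ≤ s v)
    (ht : ∀ v, 0 ≤ t v) {P u v u₁ v₁ u₂ v₂ : ℕ} {Y Z E₁ E₂ θ : ℝ} (hY : 0 ≤ Y) (hZ : 0 ≤ Z)
    (hE₁ : 0 ≤ E₁) (hE₂ : 0 ≤ E₂) (h0 : 0 < θ) (h1 : θ < 1) (hu : (u : ℝ) = θ * u₁ + (1 - θ) * u₂)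
    (hv : (v : ℝ) = θ * v₁ + (1 - θ) * v₂)
    (h₁ : ∑ α, s α ^ u₁ * t α ^ v₁ ≤ E₁ ^ P * Y ^ ((u₁ : ℝ) / 2) * Z ^ ((v₁ : ℝ) / 2))
    (h₂ : ∑ α, s α ^ u₂ * t α ^ v₂ ≤ E₂ ^ P * Y ^ ((u₂ : ℝ) / 2) * Z ^ ((v₂ : ℝ) / 2)) :
    ∑ α, s α ^ u * t α ^ v ≤
      (E₁ ^ θ * E₂ ^ (1 - θ)) ^ P * Y ^ ((u : ℝ) / 2) * Z ^ ((v : ℝ) / 2) := by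
  have h1' : 0 < 1 - θ := by linarith
  have hpow : ∀ {y : ℝ}, 0 ≤ y → ∀ {w w₁ w₂ : ℕ}, (w : ℝ) = θ * w₁ + (1 - θ) * w₂ →
      y ^ w = (y ^ w₁) ^ θ * (y ^ w₂) ^ (1 - θ) := by
    intro y hy w w₁ w₂ hw
    rw [← Real.rpow_natCast, ← Real.rpow_natCast, ← Real.rpow_natCast, ← Real.rpow_mul hy,
      ← Real.rpow_mul hy, ← Real.rpow_add_of_nonneg hy (by positivity) (by positivity), hw]
    congr 1
    ring
  have hpow2 : ∀ {y : ℝ}, 0 ≤ y → ∀ {w w₁ w₂ : ℕ}, (w : ℝ) = θ * w₁ + (1 - θ) * w₂ →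
      y ^ ((w : ℝ) / 2) = (y ^ ((w₁ : ℝ) / 2)) ^ θ * (y ^ ((w₂ : ℝ) / 2)) ^ (1 - θ) := by
    intro y hy w w₁ w₂ hw
    rw [← Real.rpow_mul hy, ← Real.rpow_mul hy,
      ← Real.rpow_add_of_nonneg hy (by positivity) (by positivity), hw]
    congr 1
    ring
  have hE : ∀ {E : ℝ}, 0 ≤ E → ∀ c : ℝ, (E ^ c) ^ P = (E ^ P) ^ c := by
    intro E hE c
    rw [← Real.rpow_natCast, ← Real.rpow_natCast, ← Real.rpow_mul hE, ← Real.rpow_mul hE, mul_comm]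
  calc ∑ α, s α ^ u * t α ^ v
      = ∑ α, (s α ^ u₁ * t α ^ v₁) ^ θ * (s α ^ u₂ * t α ^ v₂) ^ (1 - θ) := by
        refine sum_congr rfl fun α _ => ?_
        have := hs α
        have := ht α
        rw [hpow (hs α) hu, hpow (ht α) hv, Real.mul_rpow (by positivity) (by positivity),
          Real.mul_rpow (by positivity) (by positivity)]
        ring
    _ ≤ (∑ α, s α ^ u₁ * t α ^ v₁) ^ θ * (∑ α, s α ^ u₂ * t α ^ v₂) ^ (1 - θ) :=
        inner_rpow_le univ (fun α => mul_nonneg (pow_nonneg (hs α) _) (pow_nonneg (ht α) _))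
          (fun α => mul_nonneg (pow_nonneg (hs α) _) (pow_nonneg (ht α) _)) h0 h1
    _ ≤ (E₁ ^ P * Y ^ ((u₁ : ℝ) / 2) * Z ^ ((v₁ : ℝ) / 2)) ^ θ *
          (E₂ ^ P * Y ^ ((u₂ : ℝ) / 2) * Z ^ ((v₂ : ℝ) / 2)) ^ (1 - θ) := by
        have hnn : ∀ u v, 0 ≤ ∑ α, s α ^ u * t α ^ v := fun u v =>
          sum_nonneg fun α _ => mul_nonneg (pow_nonneg (hs α) _) (pow_nonneg (ht α) _)
        have := hnn u₁ v₁
        have := hnn u₂ v₂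
        gcongr
    _ = _ := by
        rw [mul_pow, hE hE₁, hE hE₂, hpow2 hY hu, hpow2 hZ hv,
          Real.mul_rpow (by positivity) (by positivity),
          Real.mul_rpow (by positivity) (by positivity),
          Real.mul_rpow (by positivity) (by positivity),
          Real.mul_rpow (by positivity) (by positivity)]
        ring

/-- A mixed mean value of two pieces of a sum, coming from residue classes modulo `p ^ a` and
`p ^ b` which are different modulo `p`, is bounded in terms of the residue classes
modulo `p ^ n`, with constant `E`. -/
def Bilinear {V : Type*} [Fintype V] (p k n : ℕ) (g : ℤ → V → ℂ) (x : ℤ → ℤ) (l a b : ℕ)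
    (E : ℝ) : Prop :=
  ∀ S T : Finset ℤ, (∀ i ∈ S, ∀ j ∈ S, (p : ℤ) ^ a ∣ x i - x j) →
    (∀ i ∈ T, ∀ j ∈ T, (p : ℤ) ^ b ∣ x i - x j) →
    (∀ i ∈ S, ∀ j ∈ T, ¬ (p : ℤ) ∣ x i - x j) →
    ∑ α, ‖∑ i ∈ S, g i α‖ ^ (l * (l + 1)) *
        ‖∑ i ∈ T, g i α‖ ^ (k * (k + 1) - l * (l + 1)) ≤
      E ^ (k * (k + 1)) *
        sqNormSum (k * (k + 1)) 1 g (blocks x ((p : ℤ) ^ n) S) ^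
          (((l * (l + 1) : ℕ) : ℝ) / 2) *
        sqNormSum (k * (k + 1)) 1 g (blocks x ((p : ℤ) ^ n) T) ^
          (((k * (k + 1) - l * (l + 1) : ℕ) : ℝ) / 2)

section Bilinear

variable {V : Type*} [Fintype V] {p k n : ℕ} {g : ℤ → V → ℂ} {x : ℤ → ℤ}

theorem Bilinear.mono {l a b : ℕ} {E E' : ℝ} (h : Bilinear p k n g x l a b E) (hE : 0 ≤ E)
    (hE' : E ≤ E') : Bilinear p k n g x l a b E' := by
  intro S T hS hT hST
  refine (h S T hS hT hST).trans ?_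
  have hW : ∀ α : V, (0 : ℝ) ≤ (1 : V → ℝ) α := fun _ => zero_le_one
  have h1 := sqNormSum_nonneg (P := k * (k + 1)) (g := g) hW (blocks x ((p : ℤ) ^ n) S)
  have h2 := sqNormSum_nonneg (P := k * (k + 1)) (g := g) hW (blocks x ((p : ℤ) ^ n) T)
  gcongr

theorem mul_succ_le {l k : ℕ} (h : l ≤ k) : l * (l + 1) ≤ k * (k + 1) := by gcongr

theorem Bilinear.interpolate {l a b : ℕ} {E₁ E₂ : ℝ} (hl : 1 ≤ l) (hlk : l < k) (hE₁ : 0 ≤ E₁)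
    (hE₂ : 0 ≤ E₂) (h₁ : Bilinear p k n g x (k - l) b a E₁)
    (h₂ : Bilinear p k n g x (l - 1) a b E₂) :
    Bilinear p k n g x l a b
      (E₁ ^ (1 / ((k : ℝ) - l + 1)) * E₂ ^ (1 - 1 / ((k : ℝ) - l + 1))) := by
  intro S T hS hT hST
  have hW : ∀ α : V, (0 : ℝ) ≤ (1 : V → ℝ) α := fun _ => zero_le_one
  have hlk' : (l : ℝ) + 1 ≤ k := by exact_mod_cast hlk
  have hpos : (0 : ℝ) < (k : ℝ) - l + 1 := by linarith
  have e1 : (((k - l) * (k - l + 1) : ℕ) : ℝ) = ((k : ℝ) - l) * ((k : ℝ) - l + 1) := by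
    push_cast [hlk.le]; ring
  have e2 : (((l - 1) * (l - 1 + 1) : ℕ) : ℝ) = ((l : ℝ) - 1) * l := by
    push_cast [hl]; ring
  have h₁' := h₁ T S hT hS fun i hi j hj hd => hST j hj i hi (by simpa using dvd_neg.2 hd)
  refine sum_pow_mul_pow_le_interpolate (fun _ => norm_nonneg _) (fun _ => norm_nonneg _)
    (sqNormSum_nonneg hW _) (sqNormSum_nonneg hW _) hE₁ hE₂
    (by positivity) ?_ ?_ ?_ (?_ : _ ≤ _ * _ * _) (h₂ S T hS hT hST)
    (u₁ := k * (k + 1) - (k - l) * (k - l + 1)) (v₁ := (k - l) * (k - l + 1))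
  · rw [div_lt_one hpos]; linarith
  · rw [Nat.cast_sub (mul_succ_le (Nat.sub_le _ _)), e1, e2]
    field_simp
    push_cast
    ring
  · rw [Nat.cast_sub (mul_succ_le hlk.le), Nat.cast_sub (mul_succ_le (by omega)), e1, e2]
    field_simp
    push_cast
    ring
  · rw [mul_right_comm]
    simpa only [mul_comm (‖∑ i ∈ T, g i _‖ ^ _)] using h₁'

theorem Bilinear.of_moment {l a b : ℕ} {E₁ E₂ : ℝ} (hl : 1 ≤ l) (hlk : l < k) (hE₁ : 0 ≤ E₁)
    (hE₂ : 0 ≤ E₂)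
    (h₁ : ∀ S : Finset ℤ, (∀ i ∈ S, ∀ j ∈ S, (p : ℤ) ^ a ∣ x i - x j) →
      moment (k * (k + 1)) 1 g S ≤ E₁ ^ (k * (k + 1)) *
        sqNormSum (k * (k + 1)) 1 g (blocks x ((p : ℤ) ^ n) S) ^ (((k * (k + 1) : ℕ) : ℝ) / 2))
    (h₂ : ∀ S : Finset ℤ, (∀ i ∈ S, ∀ j ∈ S, (p : ℤ) ^ b ∣ x i - x j) →
      moment (k * (k + 1)) 1 g S ≤ E₂ ^ (k * (k + 1)) *
        sqNormSum (k * (k + 1)) 1 g (blocks x ((p : ℤ) ^ n) S) ^ (((k * (k + 1) : ℕ) : ℝ) / 2)) :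
    Bilinear p k n g x l a b (E₁ ^ ((l * (l + 1) : ℝ) / (k * (k + 1))) *
      E₂ ^ (1 - (l * (l + 1) : ℝ) / (k * (k + 1)))) := by
  intro S T hS hT _
  have hW : ∀ α : V, (0 : ℝ) ≤ (1 : V → ℝ) α := fun _ => zero_le_one
  have hl' : (1 : ℝ) ≤ l := by exact_mod_cast hl
  have hlk' : (l : ℝ) + 1 ≤ k := by exact_mod_cast hlk
  have hk : (0 : ℝ) < k := by linarith
  refine sum_pow_mul_pow_le_interpolate (fun _ => norm_nonneg _) (fun _ => norm_nonneg _)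
    (sqNormSum_nonneg hW _) (sqNormSum_nonneg hW _) hE₁ hE₂ (by positivity) ?_ ?_ ?_
    (?_ : _ ≤ _ * _ * _) (?_ : _ ≤ _ * _ * _)
    (u₁ := k * (k + 1)) (v₁ := 0) (u₂ := 0) (v₂ := k * (k + 1))
  · rw [div_lt_one (by positivity)]; nlinarith
  · push_cast
    field_simp
    ring
  · rw [Nat.cast_sub (mul_succ_le hlk.le)]
    push_cast
    field_simp
    ring
  · simpa [moment] using h₁ S hS
  · simpa [moment] using h₂ T hT

end Bilinear

variable {p : ℕ} [Fact p.Prime]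

theorem Decouples.moment_le {k n N b : ℕ} {D : ℝ} (hD : Decouples p k (n - b) D) (hk : k ≠ 0)
    (hp : k < p) (hN : 0 < N) (hnN : n * k ≤ N) {φ : Fin k → (ZMod (p ^ N))[X]}
    (hφ : NearMoment (p : ZMod (p ^ N)) φ) (hb : 1 ≤ b) (hbn : b ≤ n) {x : ℤ → ℤ} {A : ℤ → ℂ}
    {S : Finset ℤ} (hS : ∀ i ∈ S, ∀ j ∈ S, (p : ℤ) ^ b ∣ x i - x j)
    {g : ℤ → (Fin k → ZMod (p ^ N)) → ℂ} (hg : g = fun i α => A i * wave φ (N - n * k) (x i) α) :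
    moment (k * (k + 1)) 1 g S ≤ D ^ (k * (k + 1)) *
      sqNormSum (k * (k + 1)) 1 g (blocks x ((p : ℤ) ^ n) S) ^ (((k * (k + 1) : ℕ) : ℝ) / 2) := by
  have h := Decouples.weighted (d := 0) (b := n * k) (T := ∅) (by omega) hD hk hp hN hnN hφ hb hbn
    le_rfl (by omega) hS (by simp) (by simp) 0 hg
  have e : (fun α : Fin k → ZMod (p ^ N) => ‖∑ i ∈ (∅ : Finset ℤ), g i α‖ ^ 0) = 1 := by
    ext; simp
  rwa [e] at h

theorem Bilinear.refine_left {k n N l a a' b : ℕ} {E D : ℝ} (hD : Decouples p l (a' - a) D)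
    (hD1 : 1 ≤ D) (hl : 1 ≤ l) (hlk : l < k) (hp : k < p) (hN : 0 < N) (hnN : n * k ≤ N)
    {φ : Fin k → (ZMod (p ^ N))[X]} (hφ : NearMoment (p : ZMod (p ^ N)) φ) (ha : 1 ≤ a)
    (haa' : a ≤ a') (ha' : a' ≤ n) (hb : l * a' ≤ (k - l + 1) * b) {x : ℤ → ℤ} {A : ℤ → ℂ}
    {g : ℤ → (Fin k → ZMod (p ^ N)) → ℂ} (hg : g = fun i α => A i * wave φ (N - n * k) (x i) α)
    (hE : 0 ≤ E) (h : Bilinear p k n g x l a' b E) : Bilinear p k n g x l a b (E * D) := by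
  intro S T hS hT hST
  have hW1 : ∀ α : Fin k → ZMod (p ^ N), (0 : ℝ) ≤ (1 : (Fin k → ZMod (p ^ N)) → ℝ) α :=
    fun _ => zero_le_one
  have hL : l * (l + 1) ≠ 0 := by positivity
  have hLk : l * (l + 1) ≤ k * (k + 1) := mul_succ_le hlk.le
  set L := l * (l + 1)
  set P := k * (k + 1)
  set W : (Fin k → ZMod (p ^ N)) → ℝ := fun α => ‖∑ i ∈ T, g i α‖ ^ (P - L) with hWdef
  have hW : ∀ α, 0 ≤ W α := fun α => by positivity
  have h1 := Decouples.weighted (d := k - l) (by omega) hD (by omega) hp hN hnN hφ ha haa'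
    (by nlinarith) (by linarith) hS hT hST (P - L) hg
  set Y := sqNormSum P 1 g (blocks x ((p : ℤ) ^ n) T) ^ (((P - L : ℕ) : ℝ) / 2) with hY
  have hY0 : 0 ≤ Y := Real.rpow_nonneg (sqNormSum_nonneg hW1 _) _
  have hLr : (L : ℝ) ≠ 0 := by exact_mod_cast hL
  have h2 : ∀ B ∈ blocks x ((p : ℤ) ^ a') S, moment L W g B ^ (2 / (L : ℝ)) ≤
      (E ^ P * Y) ^ (2 / (L : ℝ)) * sqNormSum P 1 g (blocks x ((p : ℤ) ^ n) B) := by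
    intro B hB
    have hBS := subset_of_mem_blocks hB
    have := h B T (fun i hi j hj => dvd_sub_of_mem_blocks hB hi hj) hT
      (fun i hi j hj => hST i (hBS hi) j hj)
    have hB0 := sqNormSum_nonneg (P := P) (g := g) hW1 (blocks x ((p : ℤ) ^ n) B)
    calc moment L W g B ^ (2 / (L : ℝ)) ≤
        (E ^ P * Y * sqNormSum P 1 g (blocks x ((p : ℤ) ^ n) B) ^ ((L : ℝ) / 2)) ^
          (2 / (L : ℝ)) := by
          have h0 : 0 ≤ moment L W g B := moment_nonneg hW B
          gcongr
          calc moment L W g B = ∑ α, ‖∑ i ∈ B, g i α‖ ^ L * ‖∑ i ∈ T, g i α‖ ^ (P - L) := by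
                simp only [moment, hWdef, mul_comm]
            _ ≤ _ := this
            _ = _ := by ring
      _ = _ := by
          rw [Real.mul_rpow (by positivity) (by positivity), ← Real.rpow_mul hB0,
            div_mul_div_cancel₀ two_ne_zero, div_self hLr, Real.rpow_one]
  have h3 : sqNormSum L W g (blocks x ((p : ℤ) ^ a') S) ≤
      (E ^ P * Y) ^ (2 / (L : ℝ)) * sqNormSum P 1 g (blocks x ((p : ℤ) ^ n) S) := by
    refine (sum_le_sum h2).trans_eq ?_
    rw [← mul_sum]
    congr 1
    exact sum_blocks_blocks (pow_dvd_pow _ ha') fun J => moment P 1 g J ^ (2 / (P : ℝ))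
  have hS0 := sqNormSum_nonneg (P := P) (g := g) hW1 (blocks x ((p : ℤ) ^ n) S)
  have hS1 := sqNormSum_nonneg (P := L) (g := g) hW (blocks x ((p : ℤ) ^ a') S)
  calc ∑ α, ‖∑ i ∈ S, g i α‖ ^ L * ‖∑ i ∈ T, g i α‖ ^ (P - L) = moment L W g S := by
        simp only [moment, hWdef, mul_comm]
    _ ≤ D ^ L * sqNormSum L W g (blocks x ((p : ℤ) ^ a') S) ^ ((L : ℝ) / 2) := h1
    _ ≤ D ^ P * ((E ^ P * Y) ^ (2 / (L : ℝ)) *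
          sqNormSum P 1 g (blocks x ((p : ℤ) ^ n) S)) ^ ((L : ℝ) / 2) := by
        gcongr
    _ = _ := by
        rw [Real.mul_rpow (by positivity) hS0, rpow_two_div_rpow hL (by positivity), mul_pow]
        ring

end Vinogradov

namespace Vinogradov

open Finset Polynomial

/-- The shape of the constants in the bilinear estimates: the bound `A * q ^ (η * n)`, improved by
`q ^ (η * G)` at the cost of the power `L ^ K`. -/
noncomputable def bilinearBound (A q η n L G K : ℝ) : ℝ := A * q ^ (η * (n - G)) * L ^ K

section BilinearBound

variable {A q η n L : ℝ}

theorem bilinearBound_nonneg (hA : 0 ≤ A) (hq : 1 ≤ q) (hL : 1 ≤ L) (G K : ℝ) :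
    0 ≤ bilinearBound A q η n L G K := by
  unfold bilinearBound
  positivity

theorem bilinearBound_mono (hA : 0 ≤ A) (hq : 1 ≤ q) (hη : 0 ≤ η) (hL : 1 ≤ L) {G G' K K' : ℝ}
    (hG : G' ≤ G) (hK : K ≤ K') :
    bilinearBound A q η n L G K ≤ bilinearBound A q η n L G' K' := by
  unfold bilinearBound
  gcongr

theorem bilinearBound_rpow_mul_rpow (hA : 0 < A) (hq : 1 ≤ q) (hL : 1 ≤ L) (G G' K K' θ : ℝ) :
    bilinearBound A q η n L G K ^ θ * bilinearBound A q η n L G' K' ^ (1 - θ) =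
      bilinearBound A q η n L (θ * G + (1 - θ) * G') (θ * K + (1 - θ) * K') := by
  have hq0 : 0 < q := by linarith
  have hL0 : 0 < L := by linarith
  have hA1 : A = A ^ θ * A ^ (1 - θ) := by rw [← Real.rpow_add hA]; simp
  have hq1 : q ^ (η * (n - (θ * G + (1 - θ) * G'))) =
      q ^ (η * (n - G) * θ) * q ^ (η * (n - G') * (1 - θ)) := by
    rw [← Real.rpow_add hq0]; congr 1; ring
  have hL1 : L ^ (θ * K + (1 - θ) * K') = L ^ (K * θ) * L ^ (K' * (1 - θ)) := by
    rw [← Real.rpow_add hL0]; congr 1; ring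
  unfold bilinearBound
  rw [Real.mul_rpow (by positivity) (by positivity), Real.mul_rpow (by positivity) (by positivity),
    Real.mul_rpow (by positivity) (by positivity), Real.mul_rpow (by positivity) (by positivity),
    ← Real.rpow_mul hq0.le, ← Real.rpow_mul hq0.le, ← Real.rpow_mul hL0.le, ← Real.rpow_mul hL0.le,
    hq1, hL1]
  nth_rewrite 3 [hA1]
  ring

theorem bilinearBound_mul (hL : 1 ≤ L) (G K : ℝ) :
    bilinearBound A q η n L G K * L = bilinearBound A q η n L G (K + 1) := by
  unfold bilinearBound
  rw [Real.rpow_add (by linarith), Real.rpow_one]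
  ring

end BilinearBound

/-- The gain after `m` iterations in the bilinear estimate of type `l`. -/
noncomputable def gain (k m l : ℕ) : ℝ :=
  (m : ℝ) * l * ((k : ℝ) - l) / (k : ℝ) ^ 2 + ((k : ℝ) - l) / k

theorem gain_succ_le {k l : ℕ} (m : ℕ) (hl : 1 ≤ l) (hlk : l < k) (b : ℝ) (hb : 0 ≤ b) :
    gain k (m + 1) l * b ≤
      1 / ((k : ℝ) - l + 1) * (gain k m (k - l) * (((k : ℝ) - l + 1) * b / l)) +
        (1 - 1 / ((k : ℝ) - l + 1)) * (gain k (m + 1) (l - 1) * b) := by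
  have hl' : (1 : ℝ) ≤ l := by exact_mod_cast hl
  have hlk' : (l : ℝ) + 1 ≤ k := by exact_mod_cast hlk
  have hk : (0 : ℝ) < k := by linarith
  have hpos : (0 : ℝ) < (k : ℝ) - l + 1 := by linarith
  have h : 1 / ((k : ℝ) - l + 1) * (gain k m (k - l) * (((k : ℝ) - l + 1) * b / l)) +
        (1 - 1 / ((k : ℝ) - l + 1)) * (gain k (m + 1) (l - 1) * b) - gain k (m + 1) l * b =
      l / (k : ℝ) ^ 2 * b := by
    unfold gain
    push_cast [hl, hlk.le]
    field_simp
    ring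
  have : 0 ≤ l / (k : ℝ) ^ 2 * b := by positivity
  linarith

theorem bilinear_iterate {V : Type*} [Fintype V] {p k n Z : ℕ} {g : ℤ → V → ℂ} {x : ℤ → ℤ}
    {A η L : ℝ} (hp : 1 ≤ p) (hA : 0 < A) (hη : 0 ≤ η) (hL : 1 ≤ L) (hZ : Z ≤ n)
    (hmoment : ∀ b, 1 ≤ b → b ≤ n → ∀ S : Finset ℤ,
      (∀ i ∈ S, ∀ j ∈ S, (p : ℤ) ^ b ∣ x i - x j) →
      moment (k * (k + 1)) 1 g S ≤ (A * (p : ℝ) ^ (η * (n - b))) ^ (k * (k + 1)) *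
        sqNormSum (k * (k + 1)) 1 g (blocks x ((p : ℤ) ^ n) S) ^ (((k * (k + 1) : ℕ) : ℝ) / 2))
    (hrefine : ∀ l a a' b E, 1 ≤ l → l < k → 1 ≤ a → a ≤ a' → a' ≤ Z →
      l * a' ≤ (k - l + 1) * b → 0 ≤ E → Bilinear p k n g x l a' b E →
      Bilinear p k n g x l a b (E * L)) (m : ℕ) :
    ∀ l a b, l < k → 1 ≤ a → a ≤ n → 1 ≤ b → k.factorial ^ m ∣ b → k ^ m * b ≤ Z →
      l * a ≤ (k - l + 1) * b →
      Bilinear p k n g x l a b (bilinearBound A p η n L (gain k m l * b) (k * m)) := by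
  have hp' : (1 : ℝ) ≤ p := by exact_mod_cast hp
  have hzero : ∀ m a b : ℕ, 0 < k → 1 ≤ b → b ≤ n →
      Bilinear p k n g x 0 a b (bilinearBound A p η n L (gain k m 0 * b) (k * m)) := by
    intro m a b hk hb hbn S T _ hT _
    have hk' : (k : ℝ) ≠ 0 := by exact_mod_cast hk.ne'
    have h := hmoment b hb hbn T hT
    have h2 : A * (p : ℝ) ^ (η * (n - b)) ≤
        bilinearBound A p η n L (gain k m 0 * b) (k * m) := by
      calc A * (p : ℝ) ^ (η * (n - b)) = bilinearBound A p η n L (gain k m 0 * b) 0 := by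
            simp [bilinearBound, gain, hk']
        _ ≤ _ := bilinearBound_mono hA.le hp' hη hL le_rfl (by positivity)
    have hT0 := sqNormSum_nonneg (P := k * (k + 1)) (g := g) (W := (1 : V → ℝ))
      (fun _ => zero_le_one) (blocks x ((p : ℤ) ^ n) T)
    calc _ = moment (k * (k + 1)) 1 g T := by simp [moment]
      _ ≤ _ := h
      _ ≤ bilinearBound A p η n L (gain k m 0 * b) (k * m) ^ (k * (k + 1)) *
        sqNormSum (k * (k + 1)) 1 g (blocks x ((p : ℤ) ^ n) T) ^
          (((k * (k + 1) : ℕ) : ℝ) / 2) := by gcongr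
      _ = _ := by simp
  induction m with
  | zero =>
    intro l a b hlk ha han hb _ hbZ _
    have hbn : b ≤ n := by
      rw [pow_zero, one_mul] at hbZ
      omega
    rcases Nat.eq_zero_or_pos l with rfl | hl
    · exact hzero 0 a b hlk hb hbn
    have hl' : (1 : ℝ) ≤ l := by exact_mod_cast hl
    have hlk' : (l : ℝ) + 1 ≤ k := by exact_mod_cast hlk
    have hk : (0 : ℝ) < k := by linarith
    have hbd : ∀ c : ℕ, A * (p : ℝ) ^ (η * (n - c)) = bilinearBound A p η n L c 0 := by
      intro c
      simp [bilinearBound]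
    have h := Bilinear.of_moment hl hlk (by positivity) (by positivity)
      (fun S hS => hmoment a ha han S hS) (fun S hS => hmoment b hb hbn S hS)
    rw [hbd, hbd, bilinearBound_rpow_mul_rpow hA hp' hL] at h
    refine h.mono (bilinearBound_nonneg hA.le hp' hL _ _)
      (bilinearBound_mono hA.le hp' hη hL ?_ (by simp))
    have h1 : gain k 0 l ≤ 1 - (l * (l + 1) : ℝ) / (k * (k + 1)) := by
      have : 1 - (l * (l + 1) : ℝ) / (k * (k + 1)) - gain k 0 l = l * (k - l) / (k * (k + 1)) := by
        unfold gain
        field_simp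
        push_cast
        ring
      have h2 : (0 : ℝ) ≤ l * (k - l) / (k * (k + 1)) := by
        have : (0 : ℝ) ≤ k - l := by linarith
        positivity
      linarith
    have h2 : (0 : ℝ) ≤ (l * (l + 1) : ℝ) / (k * (k + 1)) * a := by positivity
    have h3 : gain k 0 l * b ≤ (1 - (l * (l + 1) : ℝ) / (k * (k + 1))) * b := by gcongr
    linarith
  | succ m ih =>
    intro l
    induction l with
    | zero =>
      intro a b hk ha han hb _ hbZ _
      have hkm : 1 ≤ k ^ (m + 1) := Nat.one_le_pow _ _ hk
      exact hzero (m + 1) a b hk hb (by nlinarith)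
    | succ l ihl =>
      intro a b hlk ha han hb hdvd hbZ hab
      obtain ⟨c, rfl⟩ := hdvd
      set b := k.factorial ^ (m + 1) * c with hbdef
      have hl : 1 ≤ l + 1 := by omega
      obtain ⟨f, hf⟩ : l + 1 ∣ k.factorial := Nat.dvd_factorial (by omega) hlk.le
      set e := k.factorial ^ m * f * c with he
      have hbe : b = (l + 1) * e := by rw [hbdef, he, pow_succ, hf]; ring
      set a' := (k - (l + 1) + 1) * e with ha'
      have hla' : (l + 1) * a' = (k - (l + 1) + 1) * b := by rw [hbe, ha']; ring
      have he1 : 1 ≤ e := by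
        rcases Nat.eq_zero_or_pos e with h | h
        · rw [h, mul_zero] at hbe; omega
        · exact h
      have hk1 : 1 ≤ k := by omega
      have ha'b : a' ≤ k * b := by
        rw [hbe, ha']
        calc (k - (l + 1) + 1) * e ≤ k * e := by gcongr; omega
          _ ≤ k * ((l + 1) * e) := by gcongr; nlinarith
      have hkm : 1 ≤ k ^ m := Nat.one_le_pow _ _ hk1
      have hka' : k ^ m * a' ≤ Z := by
        calc k ^ m * a' ≤ k ^ m * (k * b) := by gcongr
          _ = k ^ (m + 1) * b := by ring
          _ ≤ Z := hbZ
      have ha'Z : a' ≤ Z := by nlinarith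
      have hbZ' : b ≤ Z := by
        calc b ≤ k ^ (m + 1) * b := Nat.le_mul_of_pos_left _ (by positivity)
          _ ≤ Z := hbZ
      have ha'1 : 1 ≤ a' := Nat.mul_pos (by omega) he1
      have haa' : a ≤ a' := by
        refine Nat.le_of_mul_le_mul_left (?_ : (l + 1) * a ≤ (l + 1) * a') (by omega)
        rw [hla']; exact hab
      have h1 := ih (k - (l + 1)) b a' (by omega) hb (hbZ'.trans hZ) ha'1
        ⟨(k - (l + 1) + 1) * f * c, by rw [ha', he]; ring⟩ hka' (by
          have : k - (k - (l + 1)) = l + 1 := by omega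
          rw [this, ha', hbe]
          calc (k - (l + 1)) * ((l + 1) * e) ≤ (k - (l + 1) + 1) * ((l + 1 + 1) * e) := by
                gcongr <;> omega
            _ = _ := by ring)
      have h2 := ihl a' b (by omega) ha'1 (ha'Z.trans hZ) hb ⟨c, rfl⟩ hbZ (by
        calc l * a' ≤ (l + 1) * a' := by gcongr; omega
          _ = (k - (l + 1) + 1) * b := hla'
          _ ≤ (k - l + 1) * b := by gcongr; omega)
      have h3 := Bilinear.interpolate (a := a') (b := b) hl hlk
        (bilinearBound_nonneg hA.le hp' hL _ _) (bilinearBound_nonneg hA.le hp' hL _ _) h1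
        (by rw [Nat.add_sub_cancel]; exact h2)
      rw [bilinearBound_rpow_mul_rpow hA hp' hL] at h3
      have h4 := hrefine (l + 1) a a' b _ hl hlk ha haa' ha'Z hla'.le
        (bilinearBound_nonneg hA.le hp' hL _ _) h3
      rw [bilinearBound_mul hL] at h4
      have hlk' : ((l + 1 : ℕ) : ℝ) + 1 ≤ k := by exact_mod_cast hlk
      have hl' : (1 : ℝ) ≤ ((l + 1 : ℕ) : ℝ) := by exact_mod_cast hl
      have hpos : (0 : ℝ) < (k : ℝ) - ((l + 1 : ℕ) : ℝ) + 1 := by linarith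
      refine h4.mono (bilinearBound_nonneg hA.le hp' hL _ _)
        (bilinearBound_mono hA.le hp' hη hL ?_ ?_)
      · have h5 := gain_succ_le (k := k) m hl hlk (b : ℝ) (Nat.cast_nonneg b)
        have h6 : ((k : ℝ) - ((l + 1 : ℕ) : ℝ) + 1) * b / ((l + 1 : ℕ) : ℝ) = a' := by
          rw [div_eq_iff (by positivity)]
          have : ((l + 1 : ℕ) : ℝ) * a' = ((k - (l + 1) + 1 : ℕ) : ℝ) * b := by exact_mod_cast hla'
          rw [Nat.cast_add (k - (l + 1)) 1, Nat.cast_sub hlk.le, Nat.cast_one] at this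
          linarith
        rwa [h6, Nat.add_sub_cancel] at h5
      · have h7 : 1 ≤ 1 / ((k : ℝ) - ((l + 1 : ℕ) : ℝ) + 1) * k := by
          rw [one_div_mul_eq_div, one_le_div hpos]
          linarith
        push_cast at h7 ⊢
        linarith

end Vinogradov

namespace Vinogradov

open Finset Polynomial

/-! ### The induction on scales -/

theorem moment_le_of_bilinear {V : Type*} [Fintype V] {p k n b : ℕ} {g : ℤ → V → ℂ} {x : ℤ → ℤ}
    (hp : 1 ≤ p) (hk : 2 ≤ k) (hb : 1 ≤ b) (hbn : b ≤ n) {E₁ E τ : ℝ} (hE₁ : 0 ≤ E₁) (hE : 0 ≤ E)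
    (hτ : 0 < τ)
    (h₁ : ∀ S : Finset ℤ, (∀ i ∈ S, ∀ j ∈ S, (p : ℤ) ^ 1 ∣ x i - x j) →
      moment (k * (k + 1)) 1 g S ≤ E₁ ^ (k * (k + 1)) *
        sqNormSum (k * (k + 1)) 1 g (blocks x ((p : ℤ) ^ n) S) ^ (((k * (k + 1) : ℕ) : ℝ) / 2))
    (h₂ : Bilinear p k n g x 1 b b E) (S : Finset ℤ) :
    moment (k * (k + 1)) 1 g S ≤
      ((1 + p * τ) ^ (k * (k + 1)) * E₁ ^ (k * (k + 1)) +
        (p : ℝ) ^ (k * (k + 1)) * (τ ^ 2)⁻¹ *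
          ((p : ℝ) ^ 2 * ((p : ℝ) ^ b) ^ (k * (k + 1) + 2) * E ^ (k * (k + 1)))) *
        sqNormSum (k * (k + 1)) 1 g (blocks x ((p : ℤ) ^ n) S) ^
          (((k * (k + 1) : ℕ) : ℝ) / 2) := by
  have hW : ∀ α : V, (0 : ℝ) ≤ (1 : V → ℝ) α := fun _ => zero_le_one
  have hp' : (1 : ℝ) ≤ p := by exact_mod_cast hp
  obtain ⟨m, hm⟩ : ∃ m, k * (k + 1) = m + 3 := ⟨k * (k + 1) - 3, by
    have : 6 ≤ k * (k + 1) := by nlinarith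
    omega⟩
  unfold Bilinear at h₂
  have hm2 : k * (k + 1) - 1 * (1 + 1) = m + 1 := by omega
  rw [hm2] at h₂
  rw [hm] at h₁ h₂ ⊢
  set nrm : Finset ℤ → ℝ := fun S => sqNormSum (m + 3) 1 g (blocks x ((p : ℤ) ^ n) S) with hnrm
  have hnrm0 : ∀ S, 0 ≤ nrm S := fun S => sqNormSum_nonneg hW _
  have hcard : ∀ (c : ℕ) (S : Finset ℤ), ((blocks x ((p : ℤ) ^ c) S).card : ℝ) ≤ (p : ℝ) ^ c := by
    intro c S
    have := card_blocks_le x (p ^ c) (pow_pos hp c) S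
    push_cast at this
    exact_mod_cast this
  have hnrm_mono : ∀ {c : ℕ} {S B : Finset ℤ}, c ≤ n → B ∈ blocks x ((p : ℤ) ^ c) S →
      nrm B ≤ nrm S := fun hc hB =>
    sqNormSum_mono hW (blocks_subset_blocks (pow_dvd_pow _ hc) hB)
  set 𝓑 := blocks x ((p : ℤ) ^ 1) S with h𝓑
  have hnarrow : ∑ B ∈ 𝓑, moment (m + 3) 1 g B ≤
      E₁ ^ (m + 3) * nrm S ^ (((m + 3 : ℕ) : ℝ) / 2) := by
    calc ∑ B ∈ 𝓑, moment (m + 3) 1 g B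
        ≤ ∑ B ∈ 𝓑, E₁ ^ (m + 3) * nrm B ^ (((m + 3 : ℕ) : ℝ) / 2) :=
          sum_le_sum fun B hB => h₁ B fun i hi j hj => dvd_sub_of_mem_blocks hB hi hj
      _ = E₁ ^ (m + 3) * ∑ B ∈ 𝓑, nrm B ^ (((m + 3 : ℕ) : ℝ) / 2) := by rw [mul_sum]
      _ ≤ E₁ ^ (m + 3) * (∑ B ∈ 𝓑, nrm B) ^ (((m + 3 : ℕ) : ℝ) / 2) := by
          gcongr
          refine sum_rpow_le_rpow_sum _ hnrm0 ?_
          push_cast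
          linarith [(Nat.cast_nonneg m : (0 : ℝ) ≤ m)]
      _ = _ := by
          congr 2
          exact sum_blocks_blocks (pow_dvd_pow _ (hb.trans hbn)) _
  have hbroad : ∀ B ∈ 𝓑, ∀ C ∈ 𝓑.erase B,
      ∑ α, ‖∑ i ∈ C, g i α‖ ^ 2 * ‖∑ i ∈ B, g i α‖ ^ (m + 1) ≤
        ((p : ℝ) ^ b) ^ (m + 3 + 2) * E ^ (m + 3) * nrm S ^ (((m + 3 : ℕ) : ℝ) / 2) := by
    intro B hB C hC
    obtain ⟨hCB, hC⟩ := mem_erase.1 hC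
    have hpiece : ∀ C' ∈ blocks x ((p : ℤ) ^ b) C, ∀ B' ∈ blocks x ((p : ℤ) ^ b) B,
        ∑ α, ‖∑ i ∈ C', g i α‖ ^ 2 * ‖∑ i ∈ B', g i α‖ ^ (m + 1) ≤
          E ^ (m + 3) * nrm S ^ (((m + 3 : ℕ) : ℝ) / 2) := by
      intro C' hC' B' hB'
      have h := h₂ C' B' (fun i hi j hj => dvd_sub_of_mem_blocks hC' hi hj)
        (fun i hi j hj => dvd_sub_of_mem_blocks hB' hi hj) (fun i hi j hj hd => hCB <| by
          have hi' := subset_of_mem_blocks hC' hi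
          have hj' := subset_of_mem_blocks hB' hj
          exact eq_of_mem_blocks hC hB
            (mem_of_mem_blocks hC hi' (subset_of_mem_blocks hB hj') (by simpa using hd)) hj')
      have h1 : nrm C' ≤ nrm S := (hnrm_mono hbn hC').trans (hnrm_mono (hb.trans hbn) hC)
      have h2 : nrm B' ≤ nrm S := (hnrm_mono hbn hB').trans (hnrm_mono (hb.trans hbn) hB)
      have := hnrm0 C'
      have := hnrm0 B'
      have := hnrm0 S
      calc _ ≤ E ^ (m + 3) * nrm C' ^ (((1 * (1 + 1) : ℕ) : ℝ) / 2) *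
            nrm B' ^ (((m + 1 : ℕ) : ℝ) / 2) := h
        _ ≤ E ^ (m + 3) * nrm S ^ (((1 * (1 + 1) : ℕ) : ℝ) / 2) *
            nrm S ^ (((m + 1 : ℕ) : ℝ) / 2) := by gcongr
        _ = _ := by
            rw [mul_assoc, ← Real.rpow_add_of_nonneg (hnrm0 S) (by positivity) (by positivity)]
            congr 2
            push_cast
            ring
    calc ∑ α, ‖∑ i ∈ C, g i α‖ ^ 2 * ‖∑ i ∈ B, g i α‖ ^ (m + 1)
        ≤ ∑ α, (((p : ℝ) ^ b) ^ 2 * ∑ C' ∈ blocks x ((p : ℤ) ^ b) C, ‖∑ i ∈ C', g i α‖ ^ 2) *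
            (((p : ℝ) ^ b) ^ (m + 1) *
              ∑ B' ∈ blocks x ((p : ℤ) ^ b) B, ‖∑ i ∈ B', g i α‖ ^ (m + 1)) := by
          have hsplit : ∀ (T : Finset ℤ) (α : V) {e : ℕ}, e ≠ 0 → ‖∑ i ∈ T, g i α‖ ^ e ≤
              ((p : ℝ) ^ b) ^ e * ∑ T' ∈ blocks x ((p : ℤ) ^ b) T, ‖∑ i ∈ T', g i α‖ ^ e := by
            intro T α e he
            rw [← sum_blocks (x := x) (q := (p : ℤ) ^ b) (S := T)]
            refine (norm_sum_pow_le _ _ he).trans ?_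
            gcongr
            exact hcard b T
          exact sum_le_sum fun α _ => mul_le_mul (hsplit C α two_ne_zero)
            (hsplit B α (Nat.succ_ne_zero m)) (by positivity) (by positivity)
      _ = ((p : ℝ) ^ b) ^ (m + 3) * ∑ C' ∈ blocks x ((p : ℤ) ^ b) C,
            ∑ B' ∈ blocks x ((p : ℤ) ^ b) B,
              ∑ α, ‖∑ i ∈ C', g i α‖ ^ 2 * ‖∑ i ∈ B', g i α‖ ^ (m + 1) := by
          have : ∀ C', ∑ B' ∈ blocks x ((p : ℤ) ^ b) B,
              ∑ α, ‖∑ i ∈ C', g i α‖ ^ 2 * ‖∑ i ∈ B', g i α‖ ^ (m + 1) =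
              ∑ α, ∑ B' ∈ blocks x ((p : ℤ) ^ b) B,
                ‖∑ i ∈ C', g i α‖ ^ 2 * ‖∑ i ∈ B', g i α‖ ^ (m + 1) := fun C' => sum_comm
          simp_rw [this]
          rw [sum_comm, mul_sum]
          refine sum_congr rfl fun α _ => ?_
          rw [← sum_mul_sum]
          ring
      _ ≤ ((p : ℝ) ^ b) ^ (m + 3) * ((p : ℝ) ^ b * ((p : ℝ) ^ b *
            (E ^ (m + 3) * nrm S ^ (((m + 3 : ℕ) : ℝ) / 2)))) := by
          have h0 : 0 ≤ E ^ (m + 3) * nrm S ^ (((m + 3 : ℕ) : ℝ) / 2) :=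
            mul_nonneg (by positivity) (Real.rpow_nonneg (hnrm0 S) _)
          gcongr
          refine (sum_le_card_nsmul _ _ _ fun C' hC' =>
            (sum_le_card_nsmul _ _ _ (hpiece C' hC'))).trans ?_
          rw [nsmul_eq_mul, nsmul_eq_mul]
          gcongr
          exacts [hcard b C, hcard b B]
      _ = _ := by ring
  have hS0 : 0 ≤ nrm S ^ (((m + 3 : ℕ) : ℝ) / 2) := Real.rpow_nonneg (hnrm0 S) _
  calc moment (m + 3) 1 g S
      ≤ ∑ α, ((1 + p * τ) ^ (m + 3) * ∑ B ∈ 𝓑, ‖∑ i ∈ B, g i α‖ ^ (m + 3) +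
          (p : ℝ) ^ (m + 3) * (τ ^ 2)⁻¹ * ∑ B ∈ 𝓑, ∑ C ∈ 𝓑.erase B,
            ‖∑ i ∈ C, g i α‖ ^ 2 * ‖∑ i ∈ B, g i α‖ ^ (m + 1)) := by
        refine sum_le_sum fun α _ => ?_
        rw [Pi.one_apply, one_mul, ← sum_blocks (x := x) (q := (p : ℤ) ^ 1)]
        refine norm_sum_pow_le_narrow_add_broad _ _ ?_ hp' hτ m
        simpa using hcard 1 S
    _ = (1 + p * τ) ^ (m + 3) * ∑ B ∈ 𝓑, moment (m + 3) 1 g B +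
          (p : ℝ) ^ (m + 3) * (τ ^ 2)⁻¹ * ∑ B ∈ 𝓑, ∑ C ∈ 𝓑.erase B,
            ∑ α, ‖∑ i ∈ C, g i α‖ ^ 2 * ‖∑ i ∈ B, g i α‖ ^ (m + 1) := by
        rw [sum_add_distrib, ← mul_sum, ← mul_sum, sum_comm]
        congr 2
        · simp [moment]
        · rw [sum_comm]
          exact sum_congr rfl fun B _ => sum_comm
    _ ≤ (1 + p * τ) ^ (m + 3) * (E₁ ^ (m + 3) * nrm S ^ (((m + 3 : ℕ) : ℝ) / 2)) +
          (p : ℝ) ^ (m + 3) * (τ ^ 2)⁻¹ * ((p : ℝ) * ((p : ℝ) *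
            (((p : ℝ) ^ b) ^ (m + 3 + 2) * E ^ (m + 3) *
              nrm S ^ (((m + 3 : ℕ) : ℝ) / 2)))) := by
        have h𝓑card : (𝓑.card : ℝ) ≤ p := by simpa [h𝓑] using hcard 1 S
        gcongr
        have hinner : ∀ B ∈ 𝓑, ∑ C ∈ 𝓑.erase B,
            ∑ α, ‖∑ i ∈ C, g i α‖ ^ 2 * ‖∑ i ∈ B, g i α‖ ^ (m + 1) ≤
              (p : ℝ) * (((p : ℝ) ^ b) ^ (m + 3 + 2) * E ^ (m + 3) *
                nrm S ^ (((m + 3 : ℕ) : ℝ) / 2)) := by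
          intro B hB
          refine (sum_le_card_nsmul _ _ _ (hbroad B hB)).trans ?_
          rw [nsmul_eq_mul]
          gcongr
          exact card_erase_le.trans (by exact_mod_cast h𝓑card)
        refine (sum_le_card_nsmul _ _ _ hinner).trans ?_
        rw [nsmul_eq_mul]
        gcongr
    _ = _ := by ring

end Vinogradov

namespace Vinogradov

open Finset Polynomial

/-- The parameters for which the induction on scales closes: `M` is the number of iterations, `ε`
the loss in lower degree decoupling. -/
theorem exists_iteration_parameters {k P : ℕ} (hk : 2 ≤ k) (hP : 0 < P) {η : ℝ} (hη : 0 < η) :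
    ∃ M : ℕ, ∃ ε : ℝ, 0 < ε ∧ (P : ℝ) + 4 ≤ η * gain k M 1 * P ∧
      ε * (k : ℝ) ^ M * (k * M) * P ≤ 1 := by
  have hk' : (2 : ℝ) ≤ k := by exact_mod_cast hk
  have hP' : (0 : ℝ) < P := by exact_mod_cast hP
  have hc : 0 < η * (((k : ℝ) - 1) / (k : ℝ) ^ 2) * P := by
    have : 0 < (k : ℝ) - 1 := by linarith
    positivity
  obtain ⟨M, hM⟩ := exists_nat_ge (((P : ℝ) + 4) / (η * (((k : ℝ) - 1) / (k : ℝ) ^ 2) * P))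
  rw [div_le_iff₀ hc] at hM
  refine ⟨M, 1 / ((k : ℝ) ^ M * (k * M) * P + 1), by positivity, hM.trans ?_, ?_⟩
  · have h1 : 0 ≤ η * (((k : ℝ) - 1) / k) * P := by
      have : 0 < (k : ℝ) - 1 := by linarith
      positivity
    have h2 : η * gain k M 1 * P = M * (η * (((k : ℝ) - 1) / (k : ℝ) ^ 2) * P) +
        η * (((k : ℝ) - 1) / k) * P := by
      unfold gain
      push_cast
      ring
    linarith
  · have h0 : (0 : ℝ) ≤ (k : ℝ) ^ M * (k * M) * P := by positivity
    rw [mul_assoc, mul_assoc, ← mul_assoc ((k : ℝ) ^ M), one_div_mul_eq_div,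
      div_le_one (by positivity)]
    linarith

theorem exists_scale {q c δ : ℝ} (hq : 1 < q) (hδ : 0 < δ) {F : ℕ} (hF : 1 ≤ F) :
    ∃ b : ℕ, 1 ≤ b ∧ F ∣ b ∧ c * q ^ (-(b : ℝ)) ≤ δ := by
  obtain ⟨b, hb⟩ := pow_unbounded_of_one_lt (c / δ) hq
  refine ⟨F * (b + 1), Nat.mul_pos hF (by omega), dvd_mul_right _ _, ?_⟩
  rw [Real.rpow_neg (by linarith), Real.rpow_natCast, ← div_eq_mul_inv, div_le_iff₀ (by positivity),
    ← div_le_iff₀' hδ]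
  exact hb.le.trans (pow_le_pow_right₀ hq.le (by nlinarith))

variable {p : ℕ} [Fact p.Prime]

theorem broad_le {P b k M : ℕ} {q η G ε C K D : ℝ} (hq : 1 < q) (hC : 1 ≤ C) (hb : 1 ≤ b)
    (hD : 0 < D) (hG : (P : ℝ) + 4 ≤ η * G * P) (hε : ε * (k : ℝ) ^ M * K * P ≤ 1) :
    (q ^ b) ^ (P + 2) * (D * q ^ (-(η * (G * b))) * (C * q ^ (ε * (k ^ M * b))) ^ K) ^ P ≤
      C ^ (K * P) * q ^ (-(b : ℝ)) * D ^ P := by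
  have hq0 : 0 < q := by linarith
  have hC0 : 0 < C := by linarith
  have h1 : (q ^ b) ^ (P + 2) = q ^ ((b : ℝ) * (P + 2)) := by
    rw [← pow_mul, ← Real.rpow_natCast]
    push_cast
    rfl
  have h2 : (D * q ^ (-(η * (G * b))) * (C * q ^ (ε * (k ^ M * b))) ^ K) ^ P =
      D ^ P * q ^ (-(η * (G * b)) * P) * (C ^ (K * P) * q ^ (ε * (k ^ M * b) * K * P)) := by
    rw [Real.mul_rpow hC0.le (by positivity), mul_pow, mul_pow, mul_pow, ← Real.rpow_mul hq0.le,
      ← Real.rpow_natCast (q ^ (-(η * (G * b)))), ← Real.rpow_natCast (C ^ K),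
      ← Real.rpow_natCast (q ^ (ε * (k ^ M * b) * K)), ← Real.rpow_mul hq0.le,
      ← Real.rpow_mul hq0.le, ← Real.rpow_mul hC0.le]
  rw [h1, h2]
  have h3 : q ^ ((b : ℝ) * (P + 2)) *
      (D ^ P * q ^ (-(η * (G * b)) * P) * (C ^ (K * P) * q ^ (ε * (k ^ M * b) * K * P))) =
      C ^ (K * P) * q ^ ((b : ℝ) * (P + 2) + -(η * (G * b)) * P + ε * (k ^ M * b) * K * P) *
        D ^ P := by
    rw [Real.rpow_add hq0, Real.rpow_add hq0]
    ring
  rw [h3]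
  gcongr
  · exact hq.le
  · have hb' : (0 : ℝ) ≤ b := by positivity
    nlinarith [mul_le_mul_of_nonneg_left hG hb', mul_le_mul_of_nonneg_left hε hb']

theorem Decouples.induction_step {k n M b : ℕ} {η ε A C τ : ℝ} (hk : 2 ≤ k) (hkp : k < p)
    (hη : 0 < η) (hε : 0 < ε) (hA : 0 < A) (hC : 1 ≤ C)
    (hlow : ∀ l, 1 ≤ l → l < k → ∀ j : ℕ, Decouples p l j (C * (p : ℝ) ^ (ε * j)))
    (hG : ((k * (k + 1) : ℕ) : ℝ) + 4 ≤ η * gain k M 1 * ((k * (k + 1) : ℕ) : ℝ))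
    (hε' : ε * (k : ℝ) ^ M * (k * M) * ((k * (k + 1) : ℕ) : ℝ) ≤ 1)
    (hb : 1 ≤ b) (hFb : k.factorial ^ M ∣ b) (hτ : 0 < τ) (hτ' : 1 + p * τ = (p : ℝ) ^ (η / 2))
    (hsmall : (p : ℝ) ^ (k * (k + 1)) * (τ ^ 2)⁻¹ * (p : ℝ) ^ 2 *
      C ^ ((k : ℝ) * M * ((k * (k + 1) : ℕ) : ℝ)) * (p : ℝ) ^ (-(b : ℝ)) ≤
        1 - ((p : ℝ) ^ (-(η / 2))) ^ (k * (k + 1)))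
    (hn : k ^ M * b ≤ n) (ih : ∀ n' < n, Decouples p k n' (A * (p : ℝ) ^ (η * n'))) :
    Decouples p k n (A * (p : ℝ) ^ (η * n)) := by
  intro N hN hnN φ hφ x a S
  have hp1 : (1 : ℝ) < p := by exact_mod_cast (Fact.out : p.Prime).one_lt
  have hp0 : (0 : ℝ) < p := by linarith
  have hbn : b ≤ n := (Nat.le_mul_of_pos_left _ (by positivity)).trans hn
  set g : ℤ → (Fin k → ZMod (p ^ N)) → ℂ := fun i α => a i * wave φ (N - n * k) (x i) α with hg
  have hmoment : ∀ c, 1 ≤ c → c ≤ n → ∀ S : Finset ℤ,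
      (∀ i ∈ S, ∀ j ∈ S, (p : ℤ) ^ c ∣ x i - x j) →
      moment (k * (k + 1)) 1 g S ≤ (A * (p : ℝ) ^ (η * (n - c))) ^ (k * (k + 1)) *
        sqNormSum (k * (k + 1)) 1 g (blocks x ((p : ℤ) ^ n) S) ^
          (((k * (k + 1) : ℕ) : ℝ) / 2) := by
    intro c hc hcn S hS
    have h := ih (n - c) (by omega)
    rw [Nat.cast_sub hcn] at h
    exact h.moment_le (by omega) hkp hN hnN hφ hc hcn hS hg
  set Z := k ^ M * b with hZ
  set L := C * (p : ℝ) ^ (ε * Z) with hLdef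
  have hL : 1 ≤ L := one_le_mul_of_one_le_of_one_le hC (Real.one_le_rpow hp1.le (by positivity))
  have hbil := bilinear_iterate (Z := Z) (L := L) (g := g) (x := x) (by exact_mod_cast hp1.le) hA
    hη.le hL hn hmoment (by
      intro l a₀ a' b' E hl hlk ha₀ haa' ha'Z hle hE hB
      have hdec : Decouples p l (a' - a₀) L := by
        refine (hlow l hl hlk (a' - a₀)).mono (by positivity) ?_
        rw [hLdef]
        gcongr
        · exact hp1.le
        · omega
      exact Bilinear.refine_left hdec hL hl hlk hkp hN hnN hφ ha₀ haa' (ha'Z.trans hn) hle hg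
        hE hB) M 1 b b (by omega) hb hbn hb hFb le_rfl (by gcongr; omega)
  have hmain := moment_le_of_bilinear (by exact_mod_cast hp1.le) hk hb hbn (by positivity)
    (bilinearBound_nonneg hA.le hp1.le hL _ _) hτ (hmoment 1 le_rfl (hb.trans hbn)) hbil S
  refine hmain.trans ?_
  have h0 := sqNormSum_nonneg (P := k * (k + 1)) (g := g) (W := 1) (fun _ => zero_le_one)
    (blocks x ((p : ℤ) ^ n) S)
  gcongr
  set P := k * (k + 1)
  set D := A * (p : ℝ) ^ (η * n) with hD
  have hD0 : 0 < D := by positivity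
  have e1 : (1 + p * τ) ^ P * (A * (p : ℝ) ^ (η * (n - (1 : ℕ)))) ^ P =
      ((p : ℝ) ^ (-(η / 2))) ^ P * D ^ P := by
    rw [hτ', ← mul_pow, ← mul_pow]
    congr 1
    rw [hD, mul_left_comm, ← Real.rpow_add hp0, mul_left_comm, ← Real.rpow_add hp0]
    congr 2
    push_cast
    ring
  have e2 : bilinearBound A p η n L (gain k M 1 * b) (k * M) =
      D * (p : ℝ) ^ (-(η * (gain k M 1 * b))) * (C * (p : ℝ) ^ (ε * (k ^ M * b))) ^
        ((k : ℝ) * M) := by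
    rw [bilinearBound, hD, hLdef, mul_assoc A _ ((p : ℝ) ^ (-(η * _))), ← Real.rpow_add hp0, hZ]
    push_cast
    congr 3
    ring
  rw [e1, e2]
  have h3 := broad_le (k := k) (M := M) (D := D) hp1 hC hb hD0 hG hε'
  calc _ = ((p : ℝ) ^ (-(η / 2))) ^ P * D ^ P + (p : ℝ) ^ P * (τ ^ 2)⁻¹ * (p : ℝ) ^ 2 *
        (((p : ℝ) ^ b) ^ (P + 2) * (D * (p : ℝ) ^ (-(η * (gain k M 1 * b))) *
          (C * (p : ℝ) ^ (ε * (k ^ M * b))) ^ ((k : ℝ) * M)) ^ P) := by ring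
    _ ≤ ((p : ℝ) ^ (-(η / 2))) ^ P * D ^ P + (p : ℝ) ^ P * (τ ^ 2)⁻¹ * (p : ℝ) ^ 2 *
        (C ^ ((k : ℝ) * M * P) * (p : ℝ) ^ (-(b : ℝ)) * D ^ P) := by gcongr
    _ = (((p : ℝ) ^ (-(η / 2))) ^ P + (p : ℝ) ^ P * (τ ^ 2)⁻¹ * (p : ℝ) ^ 2 *
        C ^ ((k : ℝ) * M * P) * (p : ℝ) ^ (-(b : ℝ))) * D ^ P := by ring
    _ ≤ 1 * D ^ P := by
        gcongr
        linarith
    _ = D ^ P := one_mul _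

variable (p) in
/-- Decoupling for the moment curve of degree `k < p`, with a loss of an arbitrarily small power. -/
theorem exists_decouples {k : ℕ} (hk : 1 ≤ k) (hkp : k < p) {η : ℝ} (hη : 0 < η) :
    ∃ A : ℝ, 1 ≤ A ∧ ∀ n : ℕ, Decouples p k n (A * (p : ℝ) ^ (η * n)) := by
  have hp1 : (1 : ℝ) < p := by exact_mod_cast (Fact.out : p.Prime).one_lt
  have hp0 : (0 : ℝ) < p := by linarith
  induction k using Nat.strong_induction_on generalizing η with
  | _ k ihk =>
  rcases hk.eq_or_lt with rfl | hk2
  · refine ⟨1, le_rfl, fun n => (decouples_one p n).mono zero_le_one ?_⟩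
    rw [one_mul]
    exact Real.one_le_rpow hp1.le (by positivity)
  have hP : 0 < k * (k + 1) := by positivity
  obtain ⟨M, ε, hε, hG, hε'⟩ := exists_iteration_parameters hk2 hP hη
  obtain ⟨C, hC, hlow⟩ : ∃ C : ℝ, 1 ≤ C ∧ ∀ l, 1 ≤ l → l < k → ∀ j : ℕ,
      Decouples p l j (C * (p : ℝ) ^ (ε * j)) := by
    have h : ∀ l, ∃ A : ℝ, 1 ≤ A ∧ (1 ≤ l → l < k → ∀ n : ℕ,
        Decouples p l n (A * (p : ℝ) ^ (ε * n))) := by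
      intro l
      by_cases hl : 1 ≤ l ∧ l < k
      · obtain ⟨A, hA, h⟩ := ihk l hl.2 hl.1 (by omega) hε
        exact ⟨A, hA, fun _ _ => h⟩
      · exact ⟨1, le_rfl, fun h1 h2 => absurd ⟨h1, h2⟩ hl⟩
    choose A hA1 hA using h
    have hA0 : ∀ l, 0 ≤ A l := fun l => zero_le_one.trans (hA1 l)
    have hle : ∀ l < k, A l ≤ ∑ l ∈ range k, A l := fun l hl =>
      single_le_sum (fun l _ => hA0 l) (mem_range.2 hl)
    refine ⟨∑ l ∈ range k, A l, (hA1 0).trans (hle 0 (by omega)), fun l hl hlk j => ?_⟩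
    refine (hA l hl hlk j).mono (mul_nonneg (hA0 l) (by positivity)) ?_
    gcongr
    exact hle l hlk
  have hpη : 1 < (p : ℝ) ^ (η / 2) := Real.one_lt_rpow hp1 (by positivity)
  set τ := ((p : ℝ) ^ (η / 2) - 1) / p with hτdef
  have hτ : 0 < τ := div_pos (by linarith) hp0
  have hτ' : 1 + p * τ = (p : ℝ) ^ (η / 2) := by
    rw [hτdef]
    field_simp
    ring
  have hδ : 0 < 1 - ((p : ℝ) ^ (-(η / 2))) ^ (k * (k + 1)) := by
    rw [sub_pos]
    refine pow_lt_one₀ (by positivity) ?_ hP.ne'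
    exact Real.rpow_lt_one_of_one_lt_of_neg hp1 (by linarith)
  obtain ⟨b, hb, hFb, hsmall⟩ := exists_scale (c := (p : ℝ) ^ (k * (k + 1)) * (τ ^ 2)⁻¹ *
      (p : ℝ) ^ 2 * C ^ ((k : ℝ) * M * ((k * (k + 1) : ℕ) : ℝ))) hp1 hδ
    (Nat.one_le_pow M _ k.factorial_pos)
  refine ⟨(p : ℝ) ^ (k ^ M * b), one_le_pow₀ hp1.le, fun n => ?_⟩
  induction n using Nat.strong_induction_on with
  | _ n ih =>
  rcases lt_or_ge n (k ^ M * b) with hn | hn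
  · refine (decouples_trivial p (by omega) n).mono (by positivity) ?_
    calc (p : ℝ) ^ n ≤ (p : ℝ) ^ (k ^ M * b) * 1 := by
          rw [mul_one]
          exact pow_le_pow_right₀ hp1.le hn.le
      _ ≤ _ := by
          gcongr
          exact Real.one_le_rpow hp1.le (by positivity)
  · exact Decouples.induction_step hk2 hkp hη hε (by positivity) hC hlow hG hε' hb hFb hτ hτ'
      hsmall hn ih

end Vinogradov

namespace Vinogradov

open Finset Polynomial

/-! ### Counting solutions of the Vinogradov system -/

theorem sum_norm_sum_stdAddChar_sq {q k : ℕ} [NeZero q] {κ : Type*} (T : Finset κ)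
    (b : κ → Fin k → ZMod q) :
    ∑ α : Fin k → ZMod q, ‖∑ x ∈ T, (ZMod.stdAddChar (∑ j, α j * b x j) : ℂ)‖ ^ 2 =
      Fintype.card (Fin k → ZMod q) * #{xy ∈ T ×ˢ T | b xy.1 = b xy.2} := by
  have h : ((∑ α : Fin k → ZMod q,
      ‖∑ x ∈ T, (ZMod.stdAddChar (∑ j, α j * b x j) : ℂ)‖ ^ 2 : ℝ) : ℂ) =
      ((Fintype.card (Fin k → ZMod q) * #{xy ∈ T ×ˢ T | b xy.1 = b xy.2} : ℝ) : ℂ) := by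
    push_cast
    simp_rw [← Complex.mul_conj', map_sum, sum_mul_sum, ← AddChar.map_neg_eq_conj,
      ← AddChar.map_add_eq_mul, ← sub_eq_add_neg, ← sum_sub_distrib, ← mul_sub, ← sum_product']
    rw [sum_product_right]
    have (xy : κ × κ) := sum_stdAddChar_sum_mul (fun j => b xy.1 j - b xy.2 j)
    simp_rw [this]
    have e : ∀ xy : κ × κ, ((fun j => b xy.1 j - b xy.2 j) = 0) = (b xy.1 = b xy.2) := by
      intro xy
      simp [funext_iff, sub_eq_zero]
    simp_rw [e]
    rw [← sum_filter, sum_const, nsmul_eq_mul, mul_comm]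
  exact_mod_cast h

variable {p : ℕ} [Fact p.Prime]

theorem card_mul_Jcount_le (N s k : ℕ) (X : ℝ) :
    (Fintype.card (Fin k → ZMod (p ^ N)) : ℝ) * Jcount s k X ≤
      ∑ α : Fin k → ZMod (p ^ N), ‖∑ i ∈ Icc 1 ⌊X⌋,
        wave (fun j : Fin k => (Polynomial.X : (ZMod (p ^ N))[X]) ^ ((j : ℕ) + 1)) 0 i α‖ ^
          (2 * s) := by
  classical
  set T : Finset (Fin s → ℤ) := Fintype.piFinset fun _ => Icc 1 ⌊X⌋ with hT
  set b : (Fin s → ℤ) → Fin k → ZMod (p ^ N) := fun x j => ∑ i, (x i : ZMod (p ^ N)) ^ ((j : ℕ) + 1)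
  have h1 : ∀ α : Fin k → ZMod (p ^ N), ‖∑ i ∈ Icc 1 ⌊X⌋,
      wave (fun j : Fin k => (Polynomial.X : (ZMod (p ^ N))[X]) ^ ((j : ℕ) + 1)) 0 i α‖ ^ (2 * s) =
      ‖∑ x ∈ T, (ZMod.stdAddChar (∑ j, α j * b x j) : ℂ)‖ ^ 2 := by
    intro α
    rw [mul_comm, pow_mul, ← norm_pow]
    congr 2
    rw [hT, sum_pow']
    refine sum_congr rfl fun x _ => ?_
    have h2 : ∑ j, α j * b x j = ∑ i, ∑ j, α j * (x i : ZMod (p ^ N)) ^ ((j : ℕ) + 1) := by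
      rw [sum_comm]
      exact sum_congr rfl fun j _ => mul_sum _ _ _
    rw [h2]
    simp only [wave, pow_zero, one_mul, eval_pow, eval_X]
    exact (map_prod ZMod.stdAddChar.toMonoidHom
      (fun i => Multiplicative.ofAdd (∑ j, α j * (x i : ZMod (p ^ N)) ^ ((j : ℕ) + 1))) univ).symm
  simp_rw [h1]
  rw [sum_norm_sum_stdAddChar_sq]
  gcongr
  rw [Jcount, ← Set.ncard_coe_finset]
  refine Set.ncard_le_ncard ?_ (finite_toSet _)
  rintro ⟨x, y⟩ ⟨hx, hy, hxy⟩
  have hmem : ∀ {z : Fin s → ℤ}, (∀ i, 1 ≤ z i ∧ (z i : ℝ) ≤ X) → z ∈ T := fun hz =>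
    Fintype.mem_piFinset.2 fun i => mem_Icc.2 ⟨(hz i).1, Int.le_floor.2 (hz i).2⟩
  refine mem_coe.2 (mem_filter.2 ⟨mk_mem_product (hmem hx) (hmem hy), ?_⟩)
  ext j
  have h3 := hxy ((j : ℕ) + 1) (mem_Icc.2 ⟨by omega, by omega⟩)
  have h4 := congrArg (Int.cast : ℤ → ZMod (p ^ N)) h3
  push_cast at h4
  rw [sum_sub_distrib, sub_eq_zero] at h4
  exact h4

theorem card_Icc_floor_le {X : ℝ} (hX : 1 ≤ X) : ((Icc 1 ⌊X⌋).card : ℝ) ≤ X := by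
  have h1 : (0 : ℤ) ≤ ⌊X⌋ := Int.floor_nonneg.2 (by linarith)
  rw [Int.card_Icc, add_sub_cancel_right]
  calc ((⌊X⌋.toNat : ℕ) : ℝ) = ((⌊X⌋.toNat : ℤ) : ℝ) := by push_cast; rfl
    _ = ((⌊X⌋ : ℤ) : ℝ) := by rw [Int.toNat_of_nonneg h1]
    _ ≤ X := Int.floor_le X

theorem norm_wave {N k : ℕ} (φ : Fin k → (ZMod (p ^ N))[X]) (m : ℕ) (t : ℤ)
    (α : Fin k → ZMod (p ^ N)) : ‖wave φ m t α‖ = 1 :=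
  AddChar.norm_apply _ _

theorem Decouples.sum_norm_pow_le {k n : ℕ} {D X : ℝ} (hD : Decouples p k n D) (hk : 1 ≤ k)
    (hn : 1 ≤ n) (hX : 1 ≤ X) (hXn : X ≤ (p : ℝ) ^ n) :
    ∑ α : Fin k → ZMod (p ^ (n * k)), ‖∑ i ∈ Icc 1 ⌊X⌋,
      wave (fun j : Fin k => (Polynomial.X : (ZMod (p ^ (n * k)))[X]) ^ ((j : ℕ) + 1)) 0 i α‖ ^
        (k * (k + 1)) ≤
      D ^ (k * (k + 1)) * (X ^ (((k * (k + 1) : ℕ) : ℝ) / 2) *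
        Fintype.card (Fin k → ZMod (p ^ (n * k)))) := by
  have hP0 : k * (k + 1) ≠ 0 := by positivity
  have h := hD (n * k) (by positivity) le_rfl
    (fun j : Fin k => (Polynomial.X : (ZMod (p ^ (n * k)))[X]) ^ ((j : ℕ) + 1))
    (fun j => ⟨0, by simp⟩) (fun i => i) (fun _ => 1) (Icc 1 ⌊X⌋)
  simp only [one_mul, Nat.sub_self] at h
  set P := k * (k + 1)
  set g : ℤ → (Fin k → ZMod (p ^ (n * k))) → ℂ := fun i α =>
    wave (fun j : Fin k => (Polynomial.X : (ZMod (p ^ (n * k)))[X]) ^ ((j : ℕ) + 1)) 0 i α with hg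
  set K : ℝ := (Fintype.card (Fin k → ZMod (p ^ (n * k))) : ℝ) with hK
  have hK0 : 0 ≤ K := Nat.cast_nonneg _
  have hblock : ∀ B ∈ blocks (fun i => i) ((p : ℤ) ^ n) (Icc 1 ⌊X⌋), moment P 1 g B = K := by
    intro B hB
    obtain ⟨i, hi⟩ := nonempty_of_mem_blocks hB
    have hfl : ⌊X⌋ ≤ (p : ℤ) ^ n := by
      have := (Int.floor_le X).trans hXn
      exact_mod_cast this
    have : B = {i} := by
      refine eq_singleton_iff_unique_mem.2 ⟨hi, fun j hj => ?_⟩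
      have hd := dvd_sub_of_mem_blocks hB hj hi
      have hi' := mem_Icc.1 (subset_of_mem_blocks hB hi)
      have hj' := mem_Icc.1 (subset_of_mem_blocks hB hj)
      have := Int.eq_zero_of_abs_lt_dvd hd (abs_lt.2 ⟨by omega, by omega⟩)
      omega
    simp [this, moment, hg, norm_wave, hK]
  have hsq : sqNormSum P 1 g (blocks (fun i => i) ((p : ℤ) ^ n) (Icc 1 ⌊X⌋)) ≤
      X * K ^ (2 / (P : ℝ)) := by
    rw [sqNormSum, sum_congr rfl fun B hB => by rw [hblock B hB], sum_const, nsmul_eq_mul]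
    gcongr
    exact le_trans (by exact_mod_cast card_image_le) (card_Icc_floor_le hX)
  have h0 := sqNormSum_nonneg (P := P) (g := g) (W := 1) (fun _ => zero_le_one)
    (blocks (fun i => i) ((p : ℤ) ^ n) (Icc 1 ⌊X⌋))
  calc _ = moment P 1 g (Icc 1 ⌊X⌋) := by simp [moment, hg]
    _ ≤ _ := h
    _ ≤ D ^ P * (X * K ^ (2 / (P : ℝ))) ^ ((P : ℝ) / 2) := by
        have := (Nat.even_mul_succ_self k).pow_nonneg D
        gcongr
    _ = _ := by
        rw [Real.mul_rpow (by linarith) (by positivity), rpow_two_div_rpow hP0 hK0]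

/-- Mean values of exponential sums along the moment curve, over a suitable finite group. -/
theorem exists_sum_norm_pow_le {k : ℕ} (hk : 1 ≤ k) (hkp : k < p) {ε : ℝ} (hε : 0 < ε) :
    ∃ C : ℝ, 1 ≤ C ∧ ∀ X : ℝ, 1 ≤ X → ∃ N : ℕ,
      ∑ α : Fin k → ZMod (p ^ N), ‖∑ i ∈ Icc 1 ⌊X⌋,
        wave (fun j : Fin k => (Polynomial.X : (ZMod (p ^ N))[X]) ^ ((j : ℕ) + 1)) 0 i α‖ ^
          (k * (k + 1)) ≤
        Fintype.card (Fin k → ZMod (p ^ N)) * (C * X ^ ((k * (k + 1) : ℝ) / 2 + ε)) := by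
  have hp1 : (1 : ℝ) < p := by exact_mod_cast (Fact.out : p.Prime).one_lt
  have hp0 : (0 : ℝ) < p := by linarith
  have hP0 : (0 : ℝ) < ((k * (k + 1) : ℕ) : ℝ) := by exact_mod_cast (by positivity)
  obtain ⟨A, hA, hdec⟩ := exists_decouples p hk hkp (div_pos hε hP0)
  refine ⟨A ^ (k * (k + 1)) * (p : ℝ) ^ ε, one_le_mul_of_one_le_of_one_le (one_le_pow₀ hA)
    (Real.one_le_rpow hp1.le hε.le), fun X hX => ?_⟩
  obtain ⟨n, hn1, hn2⟩ := exists_nat_pow_near hX hp1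
  have hX0 : 0 < X := by linarith
  refine ⟨(n + 1) * k, ((hdec (n + 1)).sum_norm_pow_le hk (by omega) hX hn2.le).trans ?_⟩
  set K : ℝ := (Fintype.card (Fin k → ZMod (p ^ ((n + 1) * k))) : ℝ) with hK
  have hK0 : 0 ≤ K := Nat.cast_nonneg _
  have h1 : ((p : ℝ) ^ (ε / ((k * (k + 1) : ℕ) : ℝ) * ((n + 1 : ℕ) : ℝ))) ^ (k * (k + 1)) ≤
      (p : ℝ) ^ ε * X ^ ε := by
    rw [← Real.rpow_natCast, ← Real.rpow_mul hp0.le, mul_right_comm, div_mul_cancel₀ _ hP0.ne',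
      mul_comm, Real.rpow_mul hp0.le, ← Real.mul_rpow hp0.le hX0.le, Real.rpow_natCast, pow_succ']
    gcongr
  rw [mul_pow]
  calc _ ≤ A ^ (k * (k + 1)) * ((p : ℝ) ^ ε * X ^ ε) *
        (X ^ (((k * (k + 1) : ℕ) : ℝ) / 2) * K) := by gcongr
    _ = _ := by
        rw [Real.rpow_add hX0]
        push_cast
        ring

/-- Vinogradov's mean value theorem. -/
theorem exists_Jcount_le {k s : ℕ} (hk : 1 ≤ k) (hs : 1 ≤ s) {ε : ℝ} (hε : 0 < ε) :
    ∃ C : ℝ, 0 < C ∧ ∀ X : ℝ, 1 ≤ X →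
      (Jcount s k X : ℝ) ≤ C * X ^ (2 * (s : ℝ) - min (s : ℝ) ((k * (k + 1) : ℝ) / 2) + ε) := by
  obtain ⟨p, hkp, hp⟩ := Nat.exists_infinite_primes (k + 1)
  have : Fact p.Prime := ⟨hp⟩
  obtain ⟨C, hC, h⟩ := exists_sum_norm_pow_le (p := p) hk (by omega) hε
  refine ⟨C, by linarith, fun X hX => ?_⟩
  obtain ⟨N, hN⟩ := h X hX
  have hX0 : 0 < X := by linarith
  have hC0 : 0 < C := by linarith
  have hJ := card_mul_Jcount_le (p := p) N s k X
  set f : (Fin k → ZMod (p ^ N)) → ℂ := fun α => ∑ i ∈ Icc 1 ⌊X⌋,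
    wave (fun j : Fin k => (Polynomial.X : (ZMod (p ^ N))[X]) ^ ((j : ℕ) + 1)) 0 i α
  set K : ℝ := (Fintype.card (Fin k → ZMod (p ^ N)) : ℝ) with hK
  have hK0 : 0 < K := by rw [hK]; exact_mod_cast Fintype.card_pos
  refine le_of_mul_le_mul_left (hJ.trans ?_) hK0
  have hPr : ((k * (k + 1) : ℕ) : ℝ) = k * (k + 1) := by push_cast; rfl
  rcases le_or_gt (k * (k + 1)) (2 * s) with hle | hlt
  · have hmin : min (s : ℝ) ((k * (k + 1) : ℝ) / 2) = (k * (k + 1) : ℝ) / 2 := by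
      refine min_eq_right ?_
      have : ((k * (k + 1) : ℕ) : ℝ) ≤ ((2 * s : ℕ) : ℝ) := by exact_mod_cast hle
      push_cast at this
      linarith
    have hf : ∀ α, ‖f α‖ ≤ X := by
      intro α
      refine (norm_sum_le _ _).trans ?_
      simp only [norm_wave, sum_const, nsmul_eq_mul, mul_one]
      exact card_Icc_floor_le hX
    calc ∑ α, ‖f α‖ ^ (2 * s) ≤ ∑ α, X ^ (2 * s - k * (k + 1)) * ‖f α‖ ^ (k * (k + 1)) := by
          refine sum_le_sum fun α _ => ?_
          rw [← Nat.sub_add_cancel hle, pow_add, Nat.sub_add_cancel hle]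
          gcongr
          exact hf α
      _ = X ^ (2 * s - k * (k + 1)) * ∑ α, ‖f α‖ ^ (k * (k + 1)) := by rw [mul_sum]
      _ ≤ X ^ (2 * s - k * (k + 1)) * (K * (C * X ^ ((k * (k + 1) : ℝ) / 2 + ε))) := by gcongr
      _ = _ := by
          rw [hmin, ← Real.rpow_natCast, Nat.cast_sub hle, hPr]
          have : X ^ (2 * (s : ℝ) - (k * (k + 1) : ℝ) / 2 + ε) =
              X ^ (((2 * s : ℕ) : ℝ) - k * (k + 1)) * X ^ ((k * (k + 1) : ℝ) / 2 + ε) := by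
            rw [← Real.rpow_add hX0]
            congr 1
            push_cast
            ring
          rw [this]
          ring
  · have hlt' : 2 * (s : ℝ) < k * (k + 1) := by
      rw [← hPr]
      exact_mod_cast hlt
    have hs' : (0 : ℝ) < s := by exact_mod_cast hs
    have hmin : min (s : ℝ) ((k * (k + 1) : ℝ) / 2) = s := min_eq_left (by linarith)
    have hP0 : (0 : ℝ) < k * (k + 1) := by linarith
    set θ : ℝ := 2 * s / (k * (k + 1)) with hθ
    have hθ0 : 0 < θ := by positivity
    have hθ1 : θ < 1 := (div_lt_one hP0).2 hlt'
    have hθP : θ * (k * (k + 1)) = 2 * s := div_mul_cancel₀ _ hP0.ne'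
    calc ∑ α, ‖f α‖ ^ (2 * s)
        = ∑ α, (‖f α‖ ^ (k * (k + 1))) ^ θ * (1 : ℝ) ^ (1 - θ) := by
          refine sum_congr rfl fun α _ => ?_
          rw [Real.one_rpow, mul_one, ← Real.rpow_natCast, ← Real.rpow_natCast,
            ← Real.rpow_mul (norm_nonneg _), hPr, mul_comm _ θ, hθP]
          push_cast
          rfl
      _ ≤ (∑ α, ‖f α‖ ^ (k * (k + 1))) ^ θ * (∑ _α : Fin k → ZMod (p ^ N), (1 : ℝ)) ^ (1 - θ) :=
          inner_rpow_le univ (fun _ => by positivity) (fun _ => zero_le_one) hθ0 hθ1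
      _ ≤ (K * (C * X ^ ((k * (k + 1) : ℝ) / 2 + ε))) ^ θ * K ^ (1 - θ) := by
          rw [sum_const, nsmul_eq_mul, mul_one, card_univ]
          gcongr
      _ = K * (C ^ θ * X ^ (s + θ * ε)) := by
          have h1 : K = K ^ θ * K ^ (1 - θ) := by rw [← Real.rpow_add hK0]; simp
          have h2 : ((k * (k + 1) : ℝ) / 2 + ε) * θ = s + θ * ε := by linear_combination hθP / 2
          rw [Real.mul_rpow hK0.le (by positivity), Real.mul_rpow hC0.le (by positivity),
            ← Real.rpow_mul hX0.le, h2]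
          nth_rewrite 3 [h1]
          ring
      _ ≤ K * (C ^ (1 : ℝ) * X ^ (2 * (s : ℝ) - s + ε)) := by
          gcongr
          · linarith
          · nlinarith
      _ = _ := by rw [hmin, Real.rpow_one]

theorem kappa_le {k r t : ℕ} (ht1 : 2 ≤ t) (ht2 : t ≤ k) (hr1 : 1 ≤ r) (hr2 : r ≤ k)
    (hrt : k ≤ r + t) :
    kappa k r t ≤ min (((r * (t + 1) : ℕ) : ℝ)) ((k * (k + 1) : ℝ) / 2) := by
  obtain ⟨u, rfl⟩ := Nat.exists_eq_add_of_le hr2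
  obtain ⟨m, rfl⟩ : ∃ m, t = m + u := ⟨t - u, by omega⟩
  obtain ⟨d, hd⟩ := Nat.exists_eq_add_of_le ht2
  obtain rfl : r = m + d := by omega
  have hT : (1 : ℝ) ≤ (m : ℝ) + u - 1 := by
    have : (2 : ℝ) ≤ ((m + u : ℕ) : ℝ) := by exact_mod_cast ht1
    push_cast at this
    linarith
  have hR : (1 : ℝ) ≤ (m : ℝ) + d := by exact_mod_cast hr1
  have hm0 : (0 : ℝ) ≤ m := Nat.cast_nonneg m
  have hd0 : (0 : ℝ) ≤ d := Nat.cast_nonneg d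
  have hu0 : (0 : ℝ) ≤ u := Nat.cast_nonneg u
  have hsq : ∀ v : ℕ, (0 : ℝ) ≤ (v : ℝ) * ((v : ℝ) - 1) := by
    intro v
    rcases Nat.eq_zero_or_pos v with rfl | hv
    · simp
    · have : (1 : ℝ) ≤ v := by exact_mod_cast hv
      exact mul_nonneg (by linarith) (by linarith)
  unfold kappa
  push_cast
  refine le_min ?_ ?_
  · have h1 : 0 ≤ (m : ℝ) * ((2 * (m + d) - 2) / (m + u - 1)) :=
      mul_nonneg hm0 (div_nonneg (by linarith) (by linarith))
    nlinarith [hsq m]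
  · have h1 : (2 * ((m : ℝ) + d) - 2) / (m + u - 1) = 2 + 2 * (d - u) / (m + u - 1) := by
      field_simp
      ring
    have h2 : -((u : ℝ) * (u + 1) + d * (d - 1)) ≤ 2 * (m * ((d - u) / (m + u - 1))) := by
      rcases le_or_gt (u : ℝ) d with h | h
      · have : 0 ≤ (m : ℝ) * ((d - u) / (m + u - 1)) :=
          mul_nonneg hm0 (div_nonneg (by linarith) (by linarith))
        nlinarith [hsq d]
      · have hu1 : (1 : ℝ) ≤ u := by
          have : d < u := by exact_mod_cast h
          exact_mod_cast (by omega : 1 ≤ u)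
        have h3 : (d : ℝ) - u ≤ m * ((d - u) / (m + u - 1)) := by
          rw [mul_div_assoc', le_div_iff₀ (by linarith)]
          nlinarith
        nlinarith [hsq u]
    rw [h1]
    linear_combination h2 / 2

end Vinogradov

/-- Theorem 1.3: under the conditions (1.6) on k, r, t one has
J_{r(t+1),k}(X) ≤ C X^{2r(t+1) - κ + ε}. -/
theorem theorem1_3 (k r t : ℕ) (hk : 2 ≤ k)
    (ht1 : max 2 (((k : ℝ) - 1) / 2) ≤ (t : ℝ)) (ht2 : t ≤ k)
    (hr1 : 1 ≤ r) (hr2 : r ≤ k) (hrt : k ≤ r + t) (ε : ℝ) (hε : 0 < ε) :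
    ∃ C : ℝ, 0 < C ∧ ∀ X : ℝ, 1 ≤ X →
      (Jcount (r * (t + 1)) k X : ℝ) ≤
        C * X ^ (2 * (r : ℝ) * ((t : ℝ) + 1) - kappa k r t + ε) := by
  have ht : 2 ≤ t := by exact_mod_cast (le_max_left _ _).trans ht1
  obtain ⟨C, hC, h⟩ := Vinogradov.exists_Jcount_le (k := k) (s := r * (t + 1)) (by omega)
    (Nat.mul_pos hr1 t.succ_pos) hε
  refine ⟨C, hC, fun X hX => (h X hX).trans ?_⟩
  have hκ := Vinogradov.kappa_le ht ht2 hr1 hr2 hrt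
  refine mul_le_mul_of_nonneg_left (Real.rpow_le_rpow_of_exponent_le hX ?_) hC.le
  push_cast at hκ ⊢
  linarith
end

section
/- Let k, r, t be natural numbers with k ≥ 2, max{2, (k−1)/2} ≤ t ≤ k, 1 ≤ r ≤ k and r + t ≥ k, and put μ = (1/2)(t+r−k)(t+r−k−1) and ν = (1/2)(t+r−k)(k+r−t−1). There exists a constant C₀ = C₀(k) such that for every prime p > C₀ and all integers a, b with 0 ≤ a < b and b ≥ (k−t−1)a, one has B_{a,b}^{r,t}(p) ≤ k!·p^{μb + νa}. -/
noncomputable section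

/-- The set Ξ_c^r(ξ): r-tuples of integers in [1, p^{c+1}], congruent to ξ mod p^c,
and pairwise distinct modulo p^{c+1}. -/
def XiSet (p r c : ℕ) (ξ : ℤ) : Set (Fin r → ℤ) :=
  {v | (∀ i, 1 ≤ v i ∧ v i ≤ (p : ℤ) ^ (c + 1)) ∧
       (∀ i, Int.ModEq ((p : ℤ) ^ c) (v i) ξ) ∧
       Function.Injective fun i => ((v i : ZMod (p ^ (c + 1))))}

/-- The solution set B_{a,b}^r(m;ξ,η) of the system of congruences (3.1):
r-tuples z with 1 ≤ z_i ≤ p^{kb}, satisfying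
∑_i (z_i - η)^j ≡ m_j (mod p^{jb}) for 1 ≤ j ≤ k, with z congruent modulo p^{a+1}
to some member of Ξ_a^r(ξ) (for a = 0 the tuple ξ is replaced by 0, the congruence is
modulo p, and additionally z_i is not congruent to η mod p).  Here the index j of m
is shifted: m j codes m_{j+1}. -/
def Bset (p r k a b : ℕ) (m : Fin k → ℤ) (ξ η : ℤ) : Set (Fin r → ℤ) :=
  {z | (∀ i, 1 ≤ z i ∧ z i ≤ (p : ℤ) ^ (k * b)) ∧
       (∀ j : Fin k,
          Int.ModEq ((p : ℤ) ^ (((j : ℕ) + 1) * b)) (∑ i, (z i - η) ^ ((j : ℕ) + 1)) (m j)) ∧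
       (∃ v ∈ XiSet p r a (if a = 0 then 0 else ξ),
          ∀ i, Int.ModEq ((p : ℤ) ^ (a + 1)) (z i) (v i)) ∧
       (a = 0 → ∀ i, ¬ Int.ModEq (p : ℤ) (z i) η)}

/-- The number of equivalence classes of B_{a,b}^r(m;ξ,η) under componentwise
congruence modulo p^{tb}, i.e. card C_{a,b}^{r,t}(m;ξ,η). -/
def numClasses (p r t k a b : ℕ) (m : Fin k → ℤ) (ξ η : ℤ) : ℕ :=
  Set.ncard
    ((fun (z : Fin r → ℤ) (i : Fin r) => ((z i : ZMod (p ^ (t * b))))) '' Bset p r k a b m ξ η)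

/-- μ = (1/2)(t+r-k)(t+r-k-1). -/
def muC (k r t : ℕ) : ℝ := (1/2) * ((t : ℝ) + r - k) * ((t : ℝ) + r - k - 1)

/-- ν = (1/2)(t+r-k)(k+r-t-1). -/
def nuC (k r t : ℕ) : ℝ := (1/2) * ((t : ℝ) + r - k) * ((k : ℝ) + r - t - 1)

open Polynomial in
/-- Newton's identities: over a field in which `1, …, r` are invertible, the first `r` power sums
determine an `r`-tuple of distinct elements up to permutation. -/
theorem exists_perm_of_power_sums_eq {F : Type*} [Field F] {r : ℕ}
    (hF : ∀ n : ℕ, 1 ≤ n → n ≤ r → (n : F) ≠ 0) (x y : Fin r → F) (hx : Function.Injective x)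
    (hy : Function.Injective y)
    (h : ∀ n : ℕ, 1 ≤ n → n ≤ r → ∑ i, x i ^ n = ∑ i, y i ^ n) :
    ∃ σ : Equiv.Perm (Fin r), x = y ∘ σ := by
  have hesymm : ∀ n : ℕ, n ≤ r → MvPolynomial.aeval x (MvPolynomial.esymm (Fin r) F n) =
      MvPolynomial.aeval y (MvPolynomial.esymm (Fin r) F n) := by
    intro n
    induction n using Nat.strong_induction_on with
    | _ n ih =>
      intro hn
      rcases Nat.eq_zero_or_pos n with rfl | hpos
      · simp
      have newton := MvPolynomial.mul_esymm_eq_sum (Fin r) F n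
      have newton_x := congrArg (MvPolynomial.aeval x) newton
      have newton_y := congrArg (MvPolynomial.aeval y) newton
      simp only [map_mul, map_natCast, map_pow, map_neg, map_one, map_sum] at newton_x newton_y
      apply mul_left_cancel₀ (hF n hpos hn)
      rw [newton_x, newton_y]
      congr 1
      refine Finset.sum_congr rfl fun c hc => ?_
      obtain ⟨hc, hlt⟩ := Finset.mem_filter.mp hc
      rw [Finset.HasAntidiagonal.mem_antidiagonal] at hc
      rw [ih c.1 hlt (by omega)]
      congr 1
      simpa [MvPolynomial.psum] using h c.2 (by omega) (by omega)
  have hprod : ((Finset.univ.val.map x).map fun a => X - C a).prod =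
      ((Finset.univ.val.map y).map fun a => X - C a).prod := by
    rw [Multiset.prod_X_sub_X_eq_sum_esymm, Multiset.prod_X_sub_X_eq_sum_esymm]
    simp only [Multiset.card_map, Finset.card_val, Finset.card_univ, Fintype.card_fin]
    refine Finset.sum_congr rfl fun n hn => ?_
    have := hesymm n (by simpa [Nat.lt_succ_iff] using hn)
    rw [MvPolynomial.aeval_esymm_eq_multiset_esymm,
      MvPolynomial.aeval_esymm_eq_multiset_esymm] at this
    rw [this]
  have hroots := congrArg roots hprod
  rw [roots_multiset_prod_X_sub_C, roots_multiset_prod_X_sub_C] at hroots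
  have hrange : Set.range x = Set.range y := by
    ext a
    have : a ∈ Finset.univ.val.map x ↔ a ∈ Finset.univ.val.map y := by rw [hroots]
    simpa using this
  refine ⟨(Equiv.ofInjective x hx).trans
    ((Equiv.setCongr hrange).trans (Equiv.ofInjective y hy).symm), ?_⟩
  funext i
  simp [Equiv.apply_ofInjective_symm]

open Polynomial in
/-- Uniqueness in Hensel's lemma for a system of additive congruences whose Jacobian is
nonsingular modulo `p`. -/
theorem pow_dvd_sub_of_pow_dvd_sum_eval_sub {p r : ℕ} [Fact p.Prime] (ψ : Fin r → ℤ[X])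
    (y y' : Fin r → ℤ)
    (hdet : (Matrix.of fun j i => (((derivative (ψ j)).eval (y i) : ℤ) : ZMod p)).det ≠ 0)
    (hp : ∀ i, (p : ℤ) ∣ y' i - y i) (N : ℕ)
    (h : ∀ j, (p : ℤ) ^ N ∣ ∑ i, (ψ j).eval (y' i) - ∑ i, (ψ j).eval (y i)) (i : Fin r) :
    (p : ℤ) ^ N ∣ y' i - y i := by
  have hp0 : (p : ℤ) ≠ 0 := by exact_mod_cast (Fact.out : p.Prime).ne_zero
  suffices ∀ s, 1 ≤ s → s ≤ N → ∀ i, (p : ℤ) ^ s ∣ y' i - y i by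
    rcases Nat.eq_zero_or_pos N with rfl | hN
    · simp
    · exact this N hN le_rfl i
  intro s hs
  induction s, hs using Nat.le_induction with
  | base => simpa using fun _ => hp
  | succ s hs ih =>
    intro hsN
    choose q hq using ih (by lia)
    have hvec : (Matrix.of fun j i => (((derivative (ψ j)).eval (y i) : ℤ) : ZMod p)).mulVec
        (fun i => (q i : ZMod p)) = 0 := by
      funext j
      have htaylor : ∀ i, ∃ c : ℤ, (ψ j).eval (y' i) - (ψ j).eval (y i) =
          (p : ℤ) ^ s * ((derivative (ψ j)).eval (y i) * q i + p * c) := by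
        intro i
        obtain ⟨c, hc⟩ := (ψ j).binomExpansion (y i) (p ^ s * q i)
        obtain ⟨e, rfl⟩ := Nat.exists_eq_add_of_le hs
        refine ⟨c * q i ^ 2 * p ^ e, ?_⟩
        rw [show y' i = y i + p ^ (1 + e) * q i by rw [← hq i]; ring, hc]
        ring
      choose c hc using htaylor
      have hdvd := (pow_dvd_pow (p : ℤ) hsN).trans (h j)
      rw [← Finset.sum_sub_distrib, Finset.sum_congr rfl fun i _ => hc i, ← Finset.mul_sum,
        pow_succ] at hdvd
      have := (ZMod.intCast_zmod_eq_zero_iff_dvd _ p).mpr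
        (Int.dvd_of_mul_dvd_mul_left (pow_ne_zero s hp0) hdvd)
      simpa [Matrix.mulVec, dotProduct] using this
    have hzero := Matrix.eq_zero_of_mulVec_eq_zero hdet hvec
    intro i
    rw [hq i, pow_succ]
    exact mul_dvd_mul_left _ ((ZMod.intCast_zmod_eq_zero_iff_dvd _ p).mp (congrFun hzero i))

/-- An integer is determined modulo `p ^ (e + f)` by its residue modulo `p ^ e` together with the
residue modulo `p ^ f` of its quotient by `p ^ e`. -/
theorem pow_add_dvd_sub_of_ediv_eq {p e f : ℕ} {x y : ℤ}
    (h : (p : ℤ) ^ e ∣ x - y)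
    (hdiv : ((x / (p : ℤ) ^ e : ℤ) : ZMod (p ^ f)) = ((y / (p : ℤ) ^ e : ℤ) : ZMod (p ^ f))) :
    (p : ℤ) ^ (e + f) ∣ x - y := by
  have hmod : x % (p : ℤ) ^ e = y % (p : ℤ) ^ e := 
    Int.emod_eq_emod_iff_emod_sub_eq_zero.mpr (Int.emod_eq_zero_of_dvd h)
  have hd : (p : ℤ) ^ f ∣ x / (p : ℤ) ^ e - y / (p : ℤ) ^ e := by
    have := (ZMod.intCast_eq_intCast_iff_dvd_sub _ _ _).mp hdiv.symm
    exact_mod_cast this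
  have hxy : x - y = (p : ℤ) ^ e * (x / (p : ℤ) ^ e - y / (p : ℤ) ^ e) := by
    have hx := Int.mul_ediv_add_emod x ((p : ℤ) ^ e)
    have hy := Int.mul_ediv_add_emod y ((p : ℤ) ^ e)
    linarith
  rw [hxy, pow_add]
  exact mul_dvd_mul_left _ hd

/-- The homogeneous Vandermonde matrix attached to points `(u i : y i)` is nonsingular. -/
theorem det_mul_pow_mul_pow_ne_zero {F : Type*} [Field F] {r k : ℕ} (hrk : r ≤ k) (c ζ q : F)
    (hc : c ≠ 0) (hζ : ζ ≠ 0) (y : Fin r → F) (hy : Function.Injective y)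
    (hu : ∀ i, ζ + q * y i ≠ 0) :
    (Matrix.of fun (j i : Fin r) =>
      c * (ζ + q * y i) ^ (k - 1 - (j : ℕ)) * y i ^ (j : ℕ)).det ≠ 0 := by
  have hrow : (Matrix.of fun (j i : Fin r) =>
      c * (ζ + q * y i) ^ (k - 1 - (j : ℕ)) * y i ^ (j : ℕ)) =
      (Matrix.of fun (i j : Fin r) => (c * (ζ + q * y i) ^ (k - 1)) *
        Matrix.vandermonde (fun i => y i / (ζ + q * y i)) i j).transpose := by
    ext j i
    have hj := j.isLt
    simp only [Matrix.of_apply, Matrix.transpose_apply, Matrix.vandermonde_apply, div_pow]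
    rw [mul_assoc, mul_assoc]
    congr 1
    rw [← mul_div_assoc, eq_div_iff (pow_ne_zero _ (hu i)), mul_right_comm, ← pow_add]
    congr 2
    lia
  rw [hrow, Matrix.det_transpose, Matrix.det_mul_column]
  refine mul_ne_zero (Finset.prod_ne_zero_iff.mpr fun i _ => mul_ne_zero hc (pow_ne_zero _ (hu i)))
    (Matrix.det_vandermonde_ne_zero_iff.mpr fun i i' hii' => hy ?_)
  have := (div_eq_div_iff (hu i) (hu i')).mp hii'
  exact mul_left_cancel₀ hζ (by linear_combination this)

open Polynomial in
/-- Formal antiderivatives of integral polynomials of degree less than `k`, scaled by `k !`. -/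
theorem exists_derivative_eq_factorial_mul (k : ℕ) (P : ℤ[X]) (hP : P.natDegree < k) :
    ∃ Q : ℤ[X], derivative Q = C (k.factorial : ℤ) * P ∧ Q.natDegree ≤ k ∧
      ∀ m, X ^ m ∣ P → X ^ (m + 1) ∣ Q := by
  set c : ℕ → ℤ := fun n => ((k.factorial / (n + 1) : ℕ) : ℤ)
  refine ⟨∑ n ∈ Finset.range k, C (c n * P.coeff n) * X ^ (n + 1), ?_, ?_, ?_⟩
  · conv_rhs => rw [P.as_sum_range_C_mul_X_pow' hP]
    rw [derivative_sum, Finset.mul_sum]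
    refine Finset.sum_congr rfl fun n hn => ?_
    have hdvd : n + 1 ∣ k.factorial := Nat.dvd_factorial (by lia) (by simpa using hn)
    have hcn : c n * ((n : ℤ) + 1) = k.factorial := by
      have := Nat.div_mul_cancel hdvd
      simp only [c]
      exact_mod_cast this
    rw [derivative_C_mul_X_pow, ← hcn]
    push_cast
    simp only [C_mul]
    ring
  · refine natDegree_sum_le_of_forall_le _ _ fun n hn => ?_
    exact (natDegree_C_mul_X_pow_le _ _).trans (by simpa using hn)
  · intro m hm
    rw [X_pow_dvd_iff] at hm
    refine Finset.dvd_sum fun n _ => ?_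
    by_cases hn : n < m
    · simp [hm n hn]
    · exact Dvd.dvd.mul_left (pow_dvd_pow X (by lia)) _

open Polynomial in
/-- For each `j < k` a suitable integral combination `f` of the monomials `X ^ (k - j), …, X ^ k`,
expanded around `ζ`, has no terms of degree `1, …, j`. -/
theorem exists_combination_eval_add_mul (k j : ℕ) (hj : j < k) (ζ q : ℤ) (hq : q ≠ 0) :
    ∃ f ψ : ℤ[X], f.natDegree ≤ k ∧ X ^ (k - j) ∣ f ∧
      (∀ y, f.eval (ζ + q * y) = f.eval ζ + q ^ (j + 1) * ψ.eval y) ∧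
      (derivative ψ = C (k.factorial : ℤ) * (C ζ + C q * X) ^ (k - 1 - j) * X ^ j) ∧
      ∃ c : ℤ, ((j : ℤ) + 1) * c = k.factorial * ζ ^ (k - 1 - j) ∧
        ∀ y, q ∣ ψ.eval y - c * y ^ (j + 1) := by
  obtain ⟨f, hf', hfdeg, hfdvd⟩ :=
    exists_derivative_eq_factorial_mul k (X ^ (k - 1 - j) * (X - C ζ) ^ j) (by
      have : (X ^ (k - 1 - j) * (X - C ζ) ^ j).natDegree ≤ (k - 1 - j) + j := by compute_degree
      lia)
  obtain ⟨g, hg', -, hgdvd⟩ :=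
    exists_derivative_eq_factorial_mul k ((C ζ + X) ^ (k - 1 - j) * X ^ j) (by
      have : ((C ζ + X) ^ (k - 1 - j) * X ^ j).natDegree ≤ (k - 1 - j) + j := by
        compute_degree
      lia)
  obtain ⟨h, rfl⟩ := hgdvd j (dvd_mul_left _ _)
  have hfg : f.comp (C ζ + X) = C (f.eval ζ) + X ^ (j + 1) * h := by
    have hder : derivative (f.comp (C ζ + X) - X ^ (j + 1) * h) = 0 := by
      rw [derivative_sub, hg', derivative_comp, hf']
      simp
    have hconst := eq_C_of_derivative_eq_zero hder
    have heval := congrArg (eval 0) hconst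
    simp only [eval_sub, eval_comp, eval_add, eval_C, eval_X, add_zero, eval_mul, eval_pow,
      zero_pow (Nat.succ_ne_zero j), zero_mul, sub_zero] at heval
    rw [← heval] at hconst
    linear_combination hconst
  have hscale : C (q ^ (j + 1)) * (X ^ (j + 1) * h.comp (C q * X)) =
      (X ^ (j + 1) * h).comp (C q * X) := by
    simp only [mul_comp, X_pow_comp, C_pow]
    ring
  refine ⟨f, X ^ (j + 1) * h.comp (C q * X), hfdeg, ?_, fun y => ?_, ?_, h.eval 0, ?_, fun y => ?_⟩
  · simpa [show k - 1 - j + 1 = k - j by lia] using hfdvd _ (dvd_mul_right _ _)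
  · have := congrArg (eval (q * y)) hfg
    simp only [eval_comp, eval_add, eval_C, eval_X, eval_mul, eval_pow] at this ⊢
    rw [this]
    ring
  · have hC : (C (q ^ (j + 1)) : ℤ[X]) ≠ 0 := C_ne_zero.mpr (pow_ne_zero _ hq)
    apply mul_left_cancel₀ hC
    rw [← derivative_C_mul, hscale, derivative_comp, hg']
    simp only [derivative_C_mul, derivative_X, mul_comp, C_comp, pow_comp, add_comp, X_comp, C_pow]
    ring
  · have := congrArg (fun P => coeff P j) hg'
    simp only [coeff_derivative, coeff_C_mul, coeff_X_pow_mul', coeff_mul_X_pow'] at this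
    simpa [coeff_zero_eq_eval_zero, mul_comm] using this
  · have hdvd := sub_dvd_eval_sub (q * y) 0 h
    rw [sub_zero] at hdvd
    simp only [eval_mul, eval_pow, eval_X, eval_comp, eval_C]
    rw [show y ^ (j + 1) * eval (q * y) h - eval 0 h * y ^ (j + 1) =
      y ^ (j + 1) * (eval (q * y) h - eval 0 h) by ring]
    exact Dvd.dvd.mul_left ((dvd_mul_right q y).trans hdvd) _

open Polynomial in
/-- If the power sums of degrees `m, …, k` of two tuples agree modulo `M`, then so do the sums of the
values of any integral combination of `X ^ m, …, X ^ k`. -/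
theorem dvd_sum_eval_sub_of_dvd_power_sums {r k m : ℕ} {f : ℤ[X]} (hdeg : f.natDegree ≤ k)
    (hX : X ^ m ∣ f) (M : ℤ) (u u' : Fin r → ℤ)
    (h : ∀ n, m ≤ n → n ≤ k → M ∣ ∑ i, u i ^ n - ∑ i, u' i ^ n) :
    M ∣ ∑ i, f.eval (u i) - ∑ i, f.eval (u' i) := by
  have hsum : ∀ v : Fin r → ℤ, ∑ i, f.eval (v i) =
      ∑ n ∈ Finset.range (k + 1), f.coeff n * ∑ i, v i ^ n := by
    intro v
    simp only [eval_eq_sum_range' (Nat.lt_succ_of_le hdeg), Finset.mul_sum]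
    exact Finset.sum_comm
  rw [hsum, hsum, ← Finset.sum_sub_distrib]
  refine Finset.dvd_sum fun n hn => ?_
  rw [← mul_sub]
  by_cases hnm : n < m
  · simp [X_pow_dvd_iff.mp hX n hnm]
  · exact Dvd.dvd.mul_left (h n (by lia) (by simpa [Nat.lt_succ_iff] using hn)) _

/-- If the data `D u` leaves only the ambiguity of an element of `π` for the class of `u`, then there
are at most `card π * card γ` classes. -/
theorem ncard_image_le_card_mul_card {α β γ π : Type*} [Finite γ] [Finite π] (U : Set α)
    (cl : α → β) (D : α → γ) (P : α → α → π → Prop)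
    (hex : ∀ u ∈ U, ∀ u₀ ∈ U, D u = D u₀ → ∃ σ, P u u₀ σ)
    (huniq : ∀ u₀ ∈ U, ∀ u ∈ U, ∀ u' ∈ U, D u = D u₀ → D u' = D u₀ → ∀ σ, P u u₀ σ →
      P u' u₀ σ → cl u = cl u') :
    (cl '' U).ncard ≤ Nat.card π * Nat.card γ := by
  have hbase : ∀ g : D '' U, ∃ u₀ ∈ U, D u₀ = g := fun g => g.2
  choose base hbaseU hbaseD using hbase
  have hsec : ∀ c : cl '' U, ∃ u ∈ U, cl u = c := fun c => c.2
  choose rep hrepU hrep using hsec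
  have hσ : ∀ c : cl '' U, ∃ σ, P (rep c) (base ⟨D (rep c), rep c, hrepU c, rfl⟩) σ :=
    fun c => hex _ (hrepU c) _ (hbaseU _)
      (hbaseD ⟨D (rep c), rep c, hrepU c, rfl⟩).symm
  choose σ hσ using hσ
  rw [← Nat.card_prod, ← Nat.card_coe_set_eq]
  refine Nat.card_le_card_of_injective (fun c => (σ c, D (rep c))) fun c c' hcc' => ?_
  obtain ⟨hσeq, hD⟩ := Prod.mk.inj hcc'
  have hbase_eq : base ⟨D (rep c'), rep c', hrepU c', rfl⟩ =
      base ⟨D (rep c), rep c, hrepU c, rfl⟩ := by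
    congr 1
    exact Subtype.ext hD.symm
  have hP := hσ c'
  rw [hbase_eq, ← hσeq] at hP
  apply Subtype.ext
  rw [← hrep c, ← hrep c']
  have hD₀ := (hbaseD ⟨D (rep c), rep c, hrepU c, rfl⟩).symm
  exact huniq _ (hbaseU _) _ (hrepU c) _ (hrepU c') hD₀ (hD.symm.trans hD₀) _ (hσ c) hP

/-- The bound for the number of classes, for tuples `u` shifted by `η` and with
`k = t + d`, `r = d + s`. -/
theorem ncard_classes_le (t d s : ℕ) (ht : 1 ≤ t) (hst : s ≤ t) (p : ℕ) [hp : Fact p.Prime]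
    (hpk : t + d < p) (a b : ℕ) (hab : a < b) (hdab : d * a ≤ b + a) (m : ℕ → ℤ) (ζ : ℤ)
    (hζ : ¬ (p : ℤ) ∣ ζ) (U : Set (Fin (d + s) → ℤ))
    (hmom : ∀ u ∈ U, ∀ n, 1 ≤ n → n ≤ t + d → (p : ℤ) ^ (n * b) ∣ ∑ i, u i ^ n - m n)
    (hmod : ∀ u ∈ U, ∀ i, (p : ℤ) ^ a ∣ u i - ζ)
    (hdist : ∀ u ∈ U, ∀ i i', (p : ℤ) ^ (a + 1) ∣ u i - u i' → i = i')
    (hunit : ∀ u ∈ U, ∀ i, ¬ (p : ℤ) ∣ u i) :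
    ((fun (u : Fin (d + s) → ℤ) (i : Fin (d + s)) => (u i : ZMod (p ^ (t * b)))) '' U).ncard ≤
      (d + s).factorial *
        p ^ (b * ∑ i ∈ Finset.range s, i + a * ∑ i ∈ Finset.range s, (d + i)) := by
  have hp0 : (p : ℤ) ≠ 0 := by exact_mod_cast hp.out.ne_zero
  have : NeZero p := ⟨hp.out.ne_zero⟩
  have hatb : a < t * b := hab.trans_le (Nat.le_mul_of_pos_left b ht)
  have hcast : ∀ n : ℕ, 1 ≤ n → n ≤ t + d → (n : ZMod p) ≠ 0 := by
    intro n hn hnk h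
    have := Nat.le_of_dvd hn ((ZMod.natCast_eq_zero_iff n p).mp h)
    lia
  have hfact : ((t + d).factorial : ZMod p) ≠ 0 := by
    rw [Ne, ZMod.natCast_eq_zero_iff, hp.out.dvd_factorial]
    lia
  have hζp : (ζ : ZMod p) ≠ 0 := by rwa [Ne, ZMod.intCast_zmod_eq_zero_iff_dvd]
  have hj : ∀ j : Fin (d + s), (j : ℕ) < t + d := fun j => by have := j.isLt; lia
  choose f ψ hfdeg hfX hfψ hψ' c hc hψc using fun j : Fin (d + s) =>
    exists_combination_eval_add_mul (t + d) j (hj j) ζ ((p : ℤ) ^ a) (pow_ne_zero a hp0)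
  obtain ⟨y, hy⟩ : ∃ y : (Fin (d + s) → ℤ) → Fin (d + s) → ℤ,
      ∀ u ∈ U, ∀ i, u i = ζ + (p : ℤ) ^ a * y u i :=
    ⟨fun u i => (u i - ζ) / (p : ℤ) ^ a, fun u hu i => by
      rw [Int.mul_ediv_cancel' (hmod u hu i)]; ring⟩
  have hyinj : ∀ u ∈ U, Function.Injective fun i => (y u i : ZMod p) := by
    intro u hu i i' hii'
    apply hdist u hu
    have := (ZMod.intCast_eq_intCast_iff_dvd_sub _ _ _).mp hii'.symm
    rw [hy u hu i, hy u hu i', pow_succ,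
      show ζ + (p : ℤ) ^ a * y u i - (ζ + (p : ℤ) ^ a * y u i') =
        (p : ℤ) ^ a * (y u i - y u i') by ring]
    exact mul_dvd_mul_left _ this
  set S : (Fin (d + s) → ℤ) → Fin (d + s) → ℤ := fun u j => ∑ i, (ψ j).eval (y u i) with hSdef
  have hfS : ∀ u ∈ U, ∀ u' ∈ U, ∀ j, ∑ i, (f j).eval (u i) - ∑ i, (f j).eval (u' i) =
      (p : ℤ) ^ (((j : ℕ) + 1) * a) * (S u j - S u' j) := by
    intro u hu u' hu' j
    have hsum : ∀ v ∈ U, ∑ i, (f j).eval (v i) =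
        ((d + s : ℕ) : ℤ) * (f j).eval ζ + (p : ℤ) ^ (((j : ℕ) + 1) * a) * S v j := by
      intro v hv
      rw [Finset.sum_congr rfl fun i _ => by rw [hy v hv i, hfψ j]]
      rw [Finset.sum_add_distrib, ← Finset.mul_sum]
      simp [hSdef, ← pow_mul, mul_comm a]
    rw [hsum u hu, hsum u' hu']
    ring
  let D : (Fin (d + s) → ℤ) → ((i : Fin s) → ZMod (p ^ ((i : ℕ) * b))) ×
      ((i : Fin s) → ZMod (p ^ ((d + (i : ℕ)) * a))) := fun u =>
    (fun i => (((∑ l, u l ^ (t - (i : ℕ))) / (p : ℤ) ^ ((t - (i : ℕ)) * b) : ℤ) : ZMod _),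
     fun i => ((S u (Fin.natAdd d i) / (p : ℤ) ^ (t * b - (d + (i : ℕ) + 1) * a) : ℤ) : ZMod _))
  have hpow : ∀ u ∈ U, ∀ u' ∈ U, ∀ n, 1 ≤ n → n ≤ t + d →
      (p : ℤ) ^ (n * b) ∣ ∑ i, u i ^ n - ∑ i, u' i ^ n := by
    intro u hu u' hu' n hn hnk
    have := dvd_sub (hmom u hu n hn hnk) (hmom u' hu' n hn hnk)
    rwa [sub_sub_sub_cancel_right] at this
  have hpow_t : ∀ u ∈ U, ∀ u' ∈ U, D u = D u' → ∀ n, t + 1 - s ≤ n → n ≤ t + d →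
      (p : ℤ) ^ (t * b) ∣ ∑ i, u i ^ n - ∑ i, u' i ^ n := by
    intro u hu u' hu' hD n hn hnk
    have hdvd := hpow u hu u' hu' n (by lia) hnk
    rcases le_or_gt t n with htn | hnt
    · exact (pow_dvd_pow _ (Nat.mul_le_mul_right b htn)).trans hdvd
    · obtain ⟨e, rfl⟩ := Nat.exists_eq_add_of_lt hnt
      have hdig := congrFun (congrArg Prod.fst hD) ⟨e + 1, by lia⟩
      simp only [D, show n + e + 1 - (e + 1) = n by lia] at hdig
      have := pow_add_dvd_sub_of_ediv_eq hdvd hdig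
      rwa [← add_mul, ← add_assoc] at this
  have hS : ∀ u ∈ U, ∀ u' ∈ U, D u = D u' → ∀ j, (p : ℤ) ^ (t * b - a) ∣ S u j - S u' j := by
    intro u hu u' hu' hD j
    have hjlt := j.isLt
    rcases lt_or_ge (j : ℕ) d with hjd | hjd
    · have hdvd := dvd_sum_eval_sub_of_dvd_power_sums (hfdeg j) (hfX j) ((p : ℤ) ^ ((t + 1) * b))
        u u' fun n hn hnk => (pow_dvd_pow _ (Nat.mul_le_mul_right b (by lia))).trans
          (hpow u hu u' hu' n (by lia) hnk)
      rw [hfS u hu u' hu' j] at hdvd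
      have hle : ((j : ℕ) + 1) * a + (t * b - a) ≤ (t + 1) * b := by
        have : ((j : ℕ) + 1) * a ≤ d * a := Nat.mul_le_mul_right a hjd
        rw [add_mul t, one_mul]
        lia
      have := (pow_dvd_pow (p : ℤ) hle).trans hdvd
      rw [pow_add] at this
      exact Int.dvd_of_mul_dvd_mul_left (pow_ne_zero _ hp0) this
    · have hdvd := dvd_sum_eval_sub_of_dvd_power_sums (hfdeg j) (hfX j) ((p : ℤ) ^ (t * b))
        u u' fun n hn hnk => hpow_t u hu u' hu' hD n (by lia) hnk
      rw [hfS u hu u' hu' j] at hdvd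
      obtain ⟨i, rfl⟩ : ∃ i : Fin s, j = Fin.natAdd d i :=
        ⟨⟨j - d, by lia⟩, Fin.ext (by simp; lia)⟩
      simp only [Fin.val_natAdd] at hdvd
      have hlow : (p : ℤ) ^ (t * b - (d + (i : ℕ) + 1) * a) ∣
          S u (Fin.natAdd d i) - S u' (Fin.natAdd d i) := by
        rcases le_total ((d + (i : ℕ) + 1) * a) (t * b) with hle | hle
        · rw [← Nat.add_sub_cancel' hle, pow_add] at hdvd
          exact Int.dvd_of_mul_dvd_mul_left (pow_ne_zero _ hp0) hdvd
        · simp [Nat.sub_eq_zero_of_le hle]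
      have hdig := congrFun (congrArg Prod.snd hD) i
      refine (pow_dvd_pow (p : ℤ) ?_).trans (pow_add_dvd_sub_of_ediv_eq hlow hdig)
      rw [add_mul _ 1, one_mul]
      omega
  have hperm : ∀ u ∈ U, ∀ u' ∈ U, D u = D u' → ∃ σ : Equiv.Perm (Fin (d + s)),
      ∀ i, (y u i : ZMod p) = y u' (σ i) := by
    intro u hu u' hu' hD
    rcases Nat.eq_zero_or_pos a with rfl | ha
    · have hinj : ∀ v ∈ U, Function.Injective fun i => (v i : ZMod p) := by
        intro v hv i i' hii'
        have := (ZMod.intCast_eq_intCast_iff_dvd_sub _ _ _).mp hii'.symm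
        exact hdist v hv i i' (by simpa using this)
      obtain ⟨σ, hσ⟩ := exists_perm_of_power_sums_eq
        (fun n hn hnr => hcast n hn (by lia)) _ _ (hinj u hu) (hinj u' hu') (by
          intro n hn hnr
          have hdvd := (dvd_pow_self (p : ℤ) (by positivity : n * b ≠ 0)).trans
            (hpow u hu u' hu' n hn (by lia))
          have := (ZMod.intCast_eq_intCast_iff_dvd_sub _ _ _).mpr hdvd
          push_cast at this
          exact this.symm)
      refine ⟨σ, fun i => ?_⟩
      have hi := congrFun hσ i
      simp only [Function.comp_apply] at hi
      rw [hy u hu i, hy u' hu' (σ i)] at hi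
      push_cast at hi
      simpa using hi
    · obtain ⟨σ, hσ⟩ := exists_perm_of_power_sums_eq
        (fun n hn hnr => hcast n hn (by lia)) _ _ (hyinj u hu) (hyinj u' hu') (by
          intro n hn hnr
          obtain ⟨j, rfl⟩ := Nat.exists_eq_add_of_le' hn
          set j' : Fin (d + s) := ⟨j, by lia⟩
          have hcj : (c j' : ZMod p) ≠ 0 := by
            intro h0
            have := congrArg (Int.cast : ℤ → ZMod p) (hc j')
            push_cast at this
            rw [h0, mul_zero] at this
            exact mul_ne_zero hfact (pow_ne_zero _ hζp) this.symm
          have hval : ∀ v, (S v j' : ZMod p) = c j' * ∑ i, (y v i : ZMod p) ^ (j + 1) := by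
            intro v
            simp only [hSdef, Int.cast_sum, Finset.mul_sum]
            refine Finset.sum_congr rfl fun i _ => ?_
            have hdvd := (dvd_pow_self (p : ℤ) (by lia : a ≠ 0)).trans (hψc j' (y v i))
            have := (ZMod.intCast_eq_intCast_iff_dvd_sub _ _ _).mpr hdvd
            push_cast at this
            exact this.symm
          have hdvd := (dvd_pow_self (p : ℤ) (by lia : t * b - a ≠ 0)).trans
            (hS u hu u' hu' hD j')
          have := (ZMod.intCast_eq_intCast_iff_dvd_sub _ _ _).mpr hdvd
          rw [hval, hval] at this
          exact (mul_left_cancel₀ hcj this).symm)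
      exact ⟨σ, fun i => congrFun hσ i⟩
  have hlift : ∀ u ∈ U, ∀ u' ∈ U, D u = D u' → (∀ i, (y u i : ZMod p) = y u' i) →
      ∀ i, (u i : ZMod (p ^ (t * b))) = u' i := by
    intro u hu u' hu' hD hyy i
    have hdet := det_mul_pow_mul_pow_ne_zero (F := ZMod p) (r := d + s) (k := t + d) (by lia)
      ((t + d).factorial : ZMod p) (ζ : ZMod p) ((p : ZMod p) ^ a) hfact hζp _ (hyinj u hu)
      (fun i h0 => hunit u hu i ((ZMod.intCast_zmod_eq_zero_iff_dvd _ p).mp (by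
        rw [hy u hu i]; push_cast; exact h0)))
    have hN := pow_dvd_sub_of_pow_dvd_sum_eval_sub ψ (y u) (y u') (by simpa [hψ'] using hdet)
      (fun i => (ZMod.intCast_eq_intCast_iff_dvd_sub _ _ _).mp (hyy i)) (t * b - a)
      (fun j => hS u' hu' u hu hD.symm j) i
    apply (ZMod.intCast_eq_intCast_iff_dvd_sub _ _ _).mpr
    rw [hy u hu i, hy u' hu' i, show ζ + (p : ℤ) ^ a * y u' i - (ζ + (p : ℤ) ^ a * y u i) =
      (p : ℤ) ^ a * (y u' i - y u i) by ring]
    push_cast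
    rw [← Nat.add_sub_cancel' hatb.le, pow_add]
    exact mul_dvd_mul_left _ hN
  have hcard := ncard_image_le_card_mul_card U
    (fun (u : Fin (d + s) → ℤ) (i : Fin (d + s)) => (u i : ZMod (p ^ (t * b)))) D
    (fun u u' (σ : Equiv.Perm (Fin (d + s))) => ∀ i, (y u i : ZMod p) = y u' (σ i)) hperm
    (fun u₀ _ u hu u' hu' hD hD' σ hσ hσ' => funext fun i =>
      hlift u hu u' hu' (hD.trans hD'.symm) (fun i => (hσ i).trans (hσ' i).symm) i)
  refine hcard.trans_eq ?_
  rw [Nat.card_eq_fintype_card, Fintype.card_perm, Fintype.card_fin, Nat.card_prod, Nat.card_pi,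
    Nat.card_pi]
  simp only [Nat.card_zmod, Finset.prod_pow_eq_pow_sum, ← Finset.sum_mul, pow_add]
  rw [Fin.sum_univ_eq_sum_range (fun i => i) s, Fin.sum_univ_eq_sum_range (fun i => d + i) s,
    mul_comm b, mul_comm a]

/-- Lemma 3.3: under the conditions (1.6) on k, r, t, for p a sufficiently large prime
(in terms of k) and integers 0 ≤ a < b with b ≥ (k-t-1)a, one has
B_{a,b}^{r,t}(p) ≤ k! p^{μb + νa}; equivalently, every class count
card C_{a,b}^{r,t}(m;ξ,η), for parameters in the prescribed ranges, obeys this bound. -/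
theorem lemma3_3 (k r t : ℕ) (hk : 2 ≤ k)
    (ht1 : max 2 (((k : ℝ) - 1) / 2) ≤ (t : ℝ)) (ht2 : t ≤ k)
    (hr1 : 1 ≤ r) (hr2 : r ≤ k) (hrt : k ≤ r + t) :
    ∃ C₀ : ℝ, ∀ p : ℕ, p.Prime → C₀ < (p : ℝ) →
      ∀ a b : ℕ, a < b → ((k : ℝ) - t - 1) * a ≤ (b : ℝ) →
      ∀ (m : Fin k → ℤ) (ξ η : ℤ),
        ((a = 0 ∧ ξ = 0) ∨
          (1 ≤ a ∧ 1 ≤ ξ ∧ ξ ≤ (p : ℤ) ^ a ∧ ¬ Int.ModEq (p : ℤ) η ξ)) →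
        1 ≤ η → η ≤ (p : ℤ) ^ b →
        (∀ j, 1 ≤ m j ∧ m j ≤ (p : ℤ) ^ (k * b)) →
        (numClasses p r t k a b m ξ η : ℝ) ≤
          (Nat.factorial k : ℝ) * (p : ℝ) ^ (muC k r t * b + nuC k r t * a) := by
  have ht : 2 ≤ t := by
    have := (le_max_left _ _).trans ht1
    exact_mod_cast this
  obtain ⟨d, rfl⟩ := Nat.exists_eq_add_of_le ht2
  obtain ⟨s, rfl⟩ : ∃ s, r = d + s := Nat.exists_eq_add_of_le (by lia)
  refine ⟨((t + d : ℕ) : ℝ), fun p hp hpk a b hab hdab m ξ η hξ _ _ _ => ?_⟩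
  have : Fact p.Prime := ⟨hp⟩
  have hpk' : t + d < p := by exact_mod_cast hpk
  have hdab' : d * a ≤ b + a := by
    have : (d : ℝ) * a ≤ b + a := by
      push_cast at hdab
      linarith
    exact_mod_cast this
  set ζ : ℤ := if a = 0 then 1 else ξ - η
  have hζ : ¬ (p : ℤ) ∣ ζ := by
    rcases hξ with ⟨ha, -⟩ | ⟨ha, -, -, hηξ⟩
    · simp only [ζ, if_pos ha]
      exact fun h => hp.one_lt.ne' (by exact_mod_cast Int.eq_one_of_dvd_one (by positivity) h)
    · simp only [ζ, if_neg (by lia : a ≠ 0)]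
      exact fun h => hηξ (Int.modEq_iff_dvd.mpr h)
  have hmod : ∀ z ∈ Bset p (d + s) (t + d) a b m ξ η, ∀ i, (p : ℤ) ^ a ∣ z i - η - ζ := by
    rintro z ⟨-, -, ⟨v, ⟨-, hvξ, -⟩, hzv⟩, -⟩ i
    by_cases ha : a = 0
    · simp [ha]
    · simp only [ζ, if_neg ha] at hvξ ⊢
      rw [show z i - η - (ξ - η) = z i - ξ by ring]
      exact (((hzv i).of_dvd (pow_dvd_pow _ (Nat.le_succ a))).trans (hvξ i)).symm.dvd
  have hbound := ncard_classes_le t d s (by lia) (by lia) p hpk' a b hab hdab'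
    (fun n => if h : 1 ≤ n ∧ n ≤ t + d then m ⟨n - 1, by lia⟩ else 0) ζ hζ
    ((fun z i => z i - η) '' Bset p (d + s) (t + d) a b m ξ η)
    (by
      rintro _ ⟨z, hz, rfl⟩ n hn hnk
      have := (hz.2.1 ⟨n - 1, by lia⟩).symm.dvd
      simpa [hn, hnk] using this)
    (by
      rintro _ ⟨z, hz, rfl⟩ i
      exact hmod z hz i)
    (by
      rintro _ ⟨z, ⟨-, -, ⟨v, ⟨-, -, hinj⟩, hzv⟩, -⟩, rfl⟩ i i' hii'
      rw [sub_sub_sub_cancel_right] at hii'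
      apply hinj
      have := ((hzv i).symm.trans ((Int.modEq_iff_dvd.mpr hii').symm.trans (hzv i')))
      exact (ZMod.intCast_eq_intCast_iff _ _ _).mpr (by exact_mod_cast this))
    (by
      rintro _ ⟨z, hz, rfl⟩ i
      by_cases ha : a = 0
      · exact fun h => hz.2.2.2 ha i (Int.modEq_iff_dvd.mpr h).symm
      · have := (dvd_pow_self (p : ℤ) ha).trans (hmod z hz i)
        exact fun h => hζ ((dvd_sub_right h).mp this))
  have hshift : numClasses p (d + s) t (t + d) a b m ξ η ≤
      ((fun (u : Fin (d + s) → ℤ) (i : Fin (d + s)) => (u i : ZMod (p ^ (t * b)))) ''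
        ((fun z i => z i - η) '' Bset p (d + s) (t + d) a b m ξ η)).ncard := by
    have : NeZero p := ⟨hp.ne_zero⟩
    refine le_trans (le_of_eq ?_) (Set.ncard_image_le
      (f := fun (w : Fin (d + s) → ZMod (p ^ (t * b))) i => w i + η) (Set.toFinite _))
    rw [numClasses, Set.image_image, Set.image_image]
    simp
  have hnat := hshift.trans hbound
  have hgauss : (∑ i ∈ Finset.range s, (i : ℝ)) = s * (s - 1) / 2 := by
    clear * -
    induction s with
    | zero => simp
    | succ n ih =>
      rw [Finset.sum_range_succ, ih]
      push_cast
      ring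
  have hexp : muC (t + d) (d + s) t * b + nuC (t + d) (d + s) t * a =
      ((b * ∑ i ∈ Finset.range s, i + a * ∑ i ∈ Finset.range s, (d + i) : ℕ) : ℝ) := by
    push_cast
    rw [Finset.sum_add_distrib, hgauss, muC, nuC]
    simp only [Finset.sum_const, Finset.card_range, nsmul_eq_mul]
    push_cast
    ring
  rw [hexp, Real.rpow_natCast]
  calc (numClasses p (d + s) t (t + d) a b m ξ η : ℝ)
      ≤ ((d + s).factorial : ℝ) *
        (p : ℝ) ^ (b * ∑ i ∈ Finset.range s, i + a * ∑ i ∈ Finset.range s, (d + i)) := by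
        exact_mod_cast hnat
    _ ≤ _ := by
        gcongr

end
end
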